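/- arXiv:2509.03197 — 3 statements merged into one kernel-verified Lean document; each statement's English description precedes it below -/
import Mathlib

section
/- Let ψ be a Dirichlet character modulo 4 or 8 (so that ψ(2) = 0), let k ≥ 1 be an integer, N ≥ 1, and let s, t ∈ ℂ with Re s > 1 and Re t > 0. Let χ denote the Dirichlet character modulo 8k·q (with q the modulus of ψ) whose value at odd m is (Jacobi symbol (k|m))·ψ(m) and 0 at even m (this is the character (4k/·)·ψ). Then the series on the left converges absolutely and Σ_{n odd ≥ 1} G((·/n),k) · ψ(n) · a_t(n) · n^{−(s+1/2)} = ( ∏_{j=0}^{N} L(s+jt, χ)/L(2s+2jt, χ²) ) · E_N(s,t;χ) · P(s,t,k;ψ), where P(s,t,k;ψ) := ∏_{p | k, p odd prime} (1 + a_t(p)·Σ_{j ≥ 1} G((·/p^j),k)·ψ(p^j)·p^{−j(s+1/2)}), the inner sums having only finitely many nonzero terms since G((·/p^j),k) = 0 for j ≥ v_p(k)+2. -/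
open Complex

noncomputable section

/-- Gauss sum `τ((·/n),k)` of the Jacobi-symbol character mod `n` (`n` odd). -/
def jacobiTau (n k : ℕ) : ℂ :=
  ∑ j ∈ Finset.range n, ((jacobiSym (j : ℤ) n : ℤ) : ℂ) *
    Complex.exp (2 * Real.pi * Complex.I * j * k / n)

/-- Modified Gauss sum `G((·/n),k)`. -/
def jacobiG (n k : ℕ) : ℂ :=
  ((1 - Complex.I) / 2 + ((jacobiSym (-1 : ℤ) n : ℤ) : ℂ) * (1 + Complex.I) / 2) * jacobiTau n k

/-- `a_t(m) = ∏_{p | m} (1 - p^{-t})^{-1}`. -/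
def aF (t : ℂ) (m : ℕ) : ℂ := ∏ p ∈ m.primeFactors, (1 - (p : ℂ) ^ (-t))⁻¹

/-- The Euler products `E_N(s,t;f)`. -/
def Erec (f : ℕ → ℂ) (s t : ℂ) : ℕ → ℂ
  | 0 => 1
  | 1 => ∏' p : Nat.Primes,
      (1 + (f p * ((p : ℕ) : ℂ) ^ s - (f p) ^ 2 * ((p : ℕ) : ℂ) ^ t + (f p) ^ 2) /
        ((((p : ℕ) : ℂ) ^ (s + t) + f p) * (((p : ℕ) : ℂ) ^ s + f p) * (((p : ℕ) : ℂ) ^ t - 1)))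
  | (N + 2) => Erec f s t (N + 1) *
      ∏' p : Nat.Primes, (1 + f p * ((p : ℕ) : ℂ) ^ (-(s + ((N : ℕ) + 2) * t)))⁻¹

/-- The finite Euler product `P(s,t,k;ψ)` over odd primes dividing `k`. -/
def Pkt (s t : ℂ) (k : ℕ) (ψf : ℕ → ℂ) : ℂ :=
  ∏ p ∈ k.primeFactors.filter (fun p => p ≠ 2),
    (1 + aF t p * ∑' j : ℕ, if 1 ≤ j then
      jacobiG (p ^ j) k * ψf (p ^ j) * ((p : ℂ)) ^ (-(j : ℂ) * (s + 1 / 2)) else 0)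

/-! `G((·/n),k)` is multiplicative in odd `n`, by quadratic reciprocity, so the series is an Euler
product of the sums over prime powers. At a prime `p ∤ 2k` only the terms `1` and `p` survive, and
`G((·/p),k) = (k/p)√p`: the sign of the quadratic Gauss sum comes from the Landsberg–Schaar
relation, which compares the asymptotics of the theta function at the two cusps `2/n` and `-n/2`.
Hence the factor at such `p` is `1 + χ(p)p^{-s}/(1 - p^{-t})`, while `P` collects the factors at the
odd primes dividing `k`, where `χ(p) = 0`.

Formally `1/(1 - p^{-t}) = ∑ p^{-jt}`, so this factor agrees to first order with the product of the
`1 + χ(p)p^{-(s+jt)}`, the local factors of `L(s+jt,χ)/L(2s+2jt,χ²)`. Dividing out `j = 0` and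
`j = 1` leaves `E₁`, and each step `E_N → E_{N+1}` divides out one more. -/

/-! ### The Landsberg–Schaar relation -/

section LandsbergSchaar

open Filter Topology

lemma ofReal_mul_cpow {r : ℝ} (hr : 0 < r) {z : ℂ} (hz : z ≠ 0) (w : ℂ) :
    (r * z) ^ w = (r : ℂ) ^ w * z ^ w := by
  have hr' : (r : ℂ) ≠ 0 := mod_cast hr.ne'
  rw [cpow_def_of_ne_zero (mul_ne_zero hr' hz), cpow_def_of_ne_zero hr', cpow_def_of_ne_zero hz,
    log_ofReal_mul hr hz, ← exp_add, ofReal_log hr.le, add_mul]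

lemma sq_mul_cpow_half {r : ℝ} (hr : 0 < r) {z : ℂ} (hz : z ≠ 0) :
    ((r : ℂ) ^ 2 * z) ^ (1 / 2 : ℂ) = r * z ^ (1 / 2 : ℂ) := by
  have h := ofReal_mul_cpow (pow_pos hr 2) hz (1 / 2)
  have hroot : ((r : ℂ) ^ 2) ^ (1 / 2 : ℂ) = r := by
    rw [one_div]
    exact sq_cpow_two_inv (by simpa using hr)
  rw [ofReal_pow, hroot] at h
  exact h

lemma sum_range_eq_sum_zmod {α : Type*} [AddCommMonoid α] (M : ℕ) [NeZero M] (f : ℕ → α) :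
    ∑ j ∈ Finset.range M, f j = ∑ x : ZMod M, f x.val := by
  cases M with
  | zero => exact absurd rfl (NeZero.ne 0)
  | succ M => exact Finset.sum_range f

lemma hasSum_int_of_hasSum_residueClasses {α : Type*} [AddCommMonoid α] [TopologicalSpace α]
    [ContinuousAdd α] {M : ℕ} [NeZero M] {f : ℤ → α} {g : ZMod M → α}
    (h : ∀ x : ZMod M, HasSum (fun l : ℤ ↦ f (x.val + M * l)) (g x)) :
    HasSum f (∑ x, g x) := by
  have hclass (x : ZMod M) : HasSum (fun m : ℤ ↦ if (m : ZMod M) = x then f m else 0) (g x) := by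
    have hinj : Function.Injective fun l : ℤ ↦ (x.val : ℤ) + M * l := fun a b hab ↦
      mul_left_cancel₀ (Nat.cast_ne_zero.mpr (NeZero.ne M)) (add_left_cancel hab)
    refine (hinj.hasSum_iff fun m hm ↦ if_neg fun hmx ↦ hm ?_).mp ?_
    · obtain ⟨l, hl⟩ : (M : ℤ) ∣ m - x.val := by
        rw [← ZMod.intCast_zmod_eq_zero_iff_dvd]
        simp [hmx]
      exact ⟨l, by simp [← hl]⟩
    · simpa [Function.comp_def] using h x
  simpa using hasSum_sum fun x (_ : x ∈ Finset.univ) ↦ hclass x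

lemma hasSum_exp_neg_mul_add_sq (z : ℂ) {w : ℂ} (hw : 0 < w.re) :
    HasSum (fun l : ℤ ↦ cexp (-Real.pi * w * (z + l) ^ 2))
      (1 / w ^ (1 / 2 : ℂ) * jacobiTheta₂ z (I / w)) := by
  have hw0 : w ≠ 0 := by rintro rfl; simp at hw
  have him : 0 < (I * w).im := by simpa using hw
  have hexp : cexp (-Real.pi * w * z ^ 2) *
      cexp (-Real.pi * I * (I * w * z) ^ 2 / (I * w)) = 1 := by
    rw [← exp_add, ← exp_zero]
    congr 1
    field_simp
    simp
  have hτ : -1 / (I * w) = I / w := by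
    field_simp
    simp
  have hfun : jacobiTheta₂ (I * w * z) (I * w) = 1 / w ^ (1 / 2 : ℂ) *
      cexp (-Real.pi * I * (I * w * z) ^ 2 / (I * w)) * jacobiTheta₂ z (I / w) := by
    rw [jacobiTheta₂_functional_equation, mul_div_cancel_left₀ z (mul_ne_zero I_ne_zero hw0), hτ,
      ← mul_assoc (-I), neg_mul, I_mul_I, neg_neg, one_mul]
  have hsum := (hasSum_jacobiTheta₂_term (I * w * z) him).mul_left (cexp (-Real.pi * w * z ^ 2))
  rw [hfun, ← mul_assoc, mul_left_comm, hexp, mul_one] at hsum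
  refine hsum.congr_fun fun l ↦ ?_
  rw [jacobiTheta₂_term, ← exp_add]
  congr 1
  linear_combination (-Real.pi * (2 * l * w * z + l ^ 2 * w)) * I_sq

lemma tendsto_jacobiTheta₂_of_im_atTop {α : Type*} {F : Filter α} (z : ℂ) {τ : α → ℂ}
    (h : Tendsto (fun a ↦ (τ a).im) F atTop) :
    Tendsto (fun a ↦ jacobiTheta₂ z (τ a)) F (𝓝 1) := by
  have hlim : Tendsto (fun a ↦ ∑' n : ℤ, jacobiTheta₂_term n z (τ a)) F
      (𝓝 (∑' n : ℤ, if n = 0 then 1 else 0)) := by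
    refine tendsto_tsum_of_dominated_convergence (bound := fun n : ℤ ↦ ‖jacobiTheta₂_term n z I‖)
      ((summable_jacobiTheta₂_term_iff z I).2 (by simp)).norm (fun n ↦ ?_) ?_
    · obtain rfl | hn := eq_or_ne n 0
      · simp [jacobiTheta₂_term, tendsto_const_nhds]
      · rw [if_neg hn, tendsto_zero_iff_norm_tendsto_zero]
        simp only [norm_jacobiTheta₂_term, sub_eq_add_neg]
        refine Real.tendsto_exp_atBot.comp
          (tendsto_atBot_add_const_right _ _ (h.const_mul_atTop_of_neg ?_))
        have : (0 : ℝ) < (n : ℝ) ^ 2 := by positivity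
        nlinarith [Real.pi_pos]
    · filter_upwards [h.eventually_ge_atTop 1] with a ha n
      simp only [norm_jacobiTheta₂_term, I_im, Real.exp_le_exp]
      have : 0 ≤ Real.pi * (n : ℝ) ^ 2 := by positivity
      nlinarith
  simpa [jacobiTheta₂] using hlim

lemma re_pos_of_inv_re_pos {w : ℂ} (hw : 0 < (w⁻¹).re) : 0 < w.re := by
  rw [inv_re] at hw
  by_contra! hneg
  exact hw.not_ge (div_nonpos_of_nonpos_of_nonneg hneg (normSq_nonneg w))

lemma hasSum_periodic_mul_exp_neg_mul_sq {M : ℕ} [NeZero M] {c : ℤ → ℂ}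
    (hc : Function.Periodic c M) {w : ℂ} (hw : 0 < w.re) :
    HasSum (fun m : ℤ ↦ c m * cexp (-Real.pi * w * m ^ 2))
      (∑ x : ZMod M, c x.val * (1 / (M * w ^ (1 / 2 : ℂ)) *
        jacobiTheta₂ (x.val / M) (I / (M ^ 2 * w)))) := by
  have hM : (0 : ℝ) < M := mod_cast NeZero.pos M
  have hMw : 0 < ((M : ℂ) ^ 2 * w).re := by
    have : ((M : ℂ) ^ 2 * w).re = (M : ℝ) ^ 2 * w.re := by
      rw [← re_ofReal_mul]; push_cast; rfl
    rw [this]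
    positivity
  have hw0 : w ≠ 0 := by rintro rfl; simp at hw
  refine hasSum_int_of_hasSum_residueClasses fun x ↦ ?_
  have hroot := sq_mul_cpow_half hM hw0
  rw [ofReal_natCast] at hroot
  rw [← hroot]
  refine ((hasSum_exp_neg_mul_add_sq (x.val / M) hMw).mul_left (c x.val)).congr_fun fun l ↦ ?_
  have hcl : c (x.val + M * l) = c x.val := by
    rw [mul_comm, ← smul_eq_mul]
    exact hc.zsmul l x.val
  rw [hcl]
  congr 2
  push_cast
  have : (M : ℂ) ≠ 0 := NeZero.ne _
  field_simp

lemma tendsto_sqrt_mul_tsum_periodic {α : Type*} {F : Filter α} {M : ℕ} [NeZero M] {c : ℤ → ℂ}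
    (hc : Function.Periodic c M) {w : α → ℂ} (hw : Tendsto (fun a ↦ ((w a)⁻¹).re) F atTop) :
    Tendsto (fun a ↦ w a ^ (1 / 2 : ℂ) * ∑' m : ℤ, c m * cexp (-Real.pi * w a * m ^ 2)) F
      (𝓝 ((∑ r ∈ Finset.range M, c r) / M)) := by
  have hM : (M : ℂ) ≠ 0 := NeZero.ne _
  have hMr : (0 : ℝ) < M := mod_cast NeZero.pos M
  have him : Tendsto (fun a ↦ (I / (M ^ 2 * w a)).im) F atTop := by
    have heq (a : α) : (I / (M ^ 2 * w a)).im = ((M : ℝ) ^ 2)⁻¹ * ((w a)⁻¹).re := by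
      rw [← re_ofReal_mul, ← I_mul_im]
      push_cast
      rw [div_eq_mul_inv, mul_inv]
    simp only [heq]
    exact hw.const_mul_atTop (by positivity)
  have hlim : Tendsto (fun a ↦ (∑ x : ZMod M, c x.val *
      jacobiTheta₂ (x.val / M) (I / (M ^ 2 * w a))) / M) F
      (𝓝 ((∑ x : ZMod M, c x.val * 1) / M)) :=
    (tendsto_finsetSum _ fun x _ ↦
      (tendsto_jacobiTheta₂_of_im_atTop _ him).const_mul _).div_const _
  simp only [mul_one] at hlim
  rw [sum_range_eq_sum_zmod]
  refine hlim.congr' ?_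
  filter_upwards [hw.eventually_gt_atTop 0] with a ha
  have hwa : w a ^ (1 / 2 : ℂ) ≠ 0 := by
    rw [cpow_ne_zero_iff_of_exponent_ne_zero (by norm_num)]
    rintro h0
    simp [h0] at ha
  rw [(hasSum_periodic_mul_exp_neg_mul_sq hc (re_pos_of_inv_re_pos ha)).tsum_eq, Finset.mul_sum,
    Finset.sum_div]
  refine Finset.sum_congr rfl fun x _ ↦ ?_
  field_simp

/-- The quadratic Gauss sum `∑_{r mod M} exp(πi b r² / M)`. The summand depends only on `r` modulo
`M` when `b * M` is even; the normalization by `πi` rather than `2πi` makes the reciprocity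
law `landsberg_schaar` symmetric. -/
def quadraticGaussSum (b : ℤ) (M : ℕ) : ℂ :=
  ∑ r ∈ Finset.range M, cexp (Real.pi * I * b * r ^ 2 / M)

lemma tendsto_sqrt_mul_jacobiTheta_rat {α : Type*} {F : Filter α} {b : ℤ} {M : ℕ} [NeZero M]
    (hbM : Even (b * M)) {w : α → ℂ} (hw : Tendsto (fun a ↦ ((w a)⁻¹).re) F atTop) :
    Tendsto (fun a ↦ w a ^ (1 / 2 : ℂ) * jacobiTheta (b / M + I * w a)) F
      (𝓝 (quadraticGaussSum b M / M)) := by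
  have hM : (M : ℂ) ≠ 0 := NeZero.ne _
  have hper : Function.Periodic (fun m : ℤ ↦ cexp (Real.pi * I * b * m ^ 2 / M)) M := by
    intro m
    obtain ⟨j, hj⟩ := hbM
    have hj' : (b * M : ℂ) = j + j := mod_cast hj
    refine exp_eq_exp_iff_exists_int.mpr ⟨b * m + j, ?_⟩
    push_cast
    field_simp
    linear_combination M * hj'
  have hlim := tendsto_sqrt_mul_tsum_periodic hper hw
  simp only [Int.cast_natCast] at hlim
  refine hlim.congr fun a ↦ ?_
  congr 1
  refine tsum_congr fun m ↦ ?_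
  rw [← exp_add]
  congr 1
  linear_combination (-(Real.pi * m ^ 2 * w a)) * I_sq

lemma jacobiTheta_neg_one_div {τ : ℂ} (hτ : 0 < τ.im) :
    jacobiTheta (-1 / τ) = (-I * τ) ^ (1 / 2 : ℂ) * jacobiTheta τ := by
  have hτ0 : -I * τ ≠ 0 := mul_ne_zero (neg_ne_zero.mpr I_ne_zero) (by rintro rfl; simp at hτ)
  have hroot : (-I * τ) ^ (1 / 2 : ℂ) ≠ 0 := by
    rwa [cpow_ne_zero_iff_of_exponent_ne_zero (by norm_num)]
  have h := jacobiTheta₂_functional_equation 0 τ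
  rw [zero_div, zero_pow two_ne_zero, mul_zero, zero_div, exp_zero, mul_one] at h
  rw [jacobiTheta_eq_jacobiTheta₂, jacobiTheta_eq_jacobiTheta₂, h,
    ← mul_assoc, mul_one_div_cancel hroot, one_mul]

lemma tendsto_re_inv_mul_inv_atTop {x : ℝ} (hx : 0 < x) :
    Tendsto (fun ε : ℝ ↦ ((ε * (x * (x + I * ε))⁻¹ : ℂ)⁻¹).re) (𝓝[>] 0) atTop := by
  refine (tendsto_inv_nhdsGT_zero.const_mul_atTop (pow_pos hx 2)).congr' ?_
  filter_upwards [self_mem_nhdsWithin] with ε hε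
  have hε0 : (ε : ℂ) ≠ 0 := mod_cast (Set.mem_Ioi.mp hε).ne'
  have hsplit : (ε * (x * (x + I * ε))⁻¹ : ℂ)⁻¹ = (x ^ 2 * ε⁻¹ : ℝ) + x * I := by
    push_cast
    field_simp
  rw [hsplit, add_re, ofReal_re, re_ofReal_mul, I_re, mul_zero, add_zero]

lemma tendsto_cpow_half_mul_cpow_half {x : ℝ} (hx : 0 < x) :
    Tendsto (fun ε : ℝ ↦ (x * (x + I * ε) : ℂ)⁻¹ ^ (1 / 2 : ℂ) *
      (-I * (x + I * ε)) ^ (1 / 2 : ℂ)) (𝓝[>] 0) (𝓝 ((x : ℂ)⁻¹ * (-I * x) ^ (1 / 2 : ℂ))) := by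
  have hx0 : (x : ℂ) ≠ 0 := mod_cast hx.ne'
  have hτ : Tendsto (fun ε : ℝ ↦ x + I * ε) (𝓝[>] 0) (𝓝 (x : ℂ)) := by
    have h : Continuous fun ε : ℝ ↦ x + I * ε := by fun_prop
    simpa using (h.tendsto 0).mono_left nhdsWithin_le_nhds
  have hroot : ((x : ℂ) * x)⁻¹ ^ (1 / 2 : ℂ) = (x : ℂ)⁻¹ := by
    have h := sq_mul_cpow_half (inv_pos.mpr hx) one_ne_zero
    rwa [one_cpow, mul_one, mul_one, ofReal_inv, inv_pow, sq] at h
  rw [← hroot]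
  refine (((hτ.const_mul (x : ℂ)).inv₀ (mul_ne_zero hx0 hx0)).cpow tendsto_const_nhds ?_).mul
    ((hτ.const_mul (-I)).cpow tendsto_const_nhds ?_)
  · exact .inl (by rw [← ofReal_mul, ← ofReal_inv, ofReal_re]; positivity)
  · exact .inr (by simpa using hx.ne')

/-- Compare the asymptotics of the two sides of `θ(-1/τ) = (-iτ)^{1/2} θ(τ)` as `τ = a/c + iε`
tends to `a/c`, so that `-1/τ` tends to `-c/a`. -/
theorem landsberg_schaar {a c : ℕ} (ha : a ≠ 0) (hc : c ≠ 0) (hac : Even (a * c)) :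
    (-I * (a / c)) ^ (1 / 2 : ℂ) * quadraticGaussSum a c = quadraticGaussSum (-c) a := by
  have : NeZero a := ⟨ha⟩
  have : NeZero c := ⟨hc⟩
  obtain ⟨x, hx, hxC⟩ : ∃ x : ℝ, 0 < x ∧ (x : ℂ) = a / c :=
    ⟨a / c, div_pos (mod_cast ha.pos) (mod_cast hc.pos), by push_cast; rfl⟩
  have hac' : Even ((a : ℤ) * c) := mod_cast hac
  have hca : Even (-(c : ℤ) * a) := by rwa [neg_mul, even_neg, mul_comm]
  have hleft := tendsto_sqrt_mul_jacobiTheta_rat (F := 𝓝[>] (0 : ℝ)) hac' (w := fun ε ↦ (ε : ℂ))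
    (by simpa only [← ofReal_inv, ofReal_re] using tendsto_inv_nhdsGT_zero)
  have hright := tendsto_sqrt_mul_jacobiTheta_rat hca (tendsto_re_inv_mul_inv_atTop hx)
  have hlim := tendsto_nhds_unique ((tendsto_cpow_half_mul_cpow_half hx).mul hleft)
    (hright.congr' ?_)
  · rw [hxC] at hlim
    field_simp at hlim ⊢
    exact hlim
  filter_upwards [self_mem_nhdsWithin] with ε hε
  have hε : 0 < ε := hε
  have hτ : 0 < (x + I * ε).im := by simpa using hε
  have hτ0 : (x + I * ε : ℂ) ≠ 0 := by rintro h; simp [h] at hτ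
  have hx0 : (x : ℂ) ≠ 0 := mod_cast hx.ne'
  have hdual : ((-c : ℤ) : ℂ) / a + I * (ε * (x * (x + I * ε))⁻¹) = -1 / (x + I * ε) := by
    have : ((-c : ℤ) : ℂ) / a = -(x : ℂ)⁻¹ := by rw [hxC]; push_cast; field_simp
    rw [this]
    field_simp
    ring
  rw [hdual, jacobiTheta_neg_one_div hτ,
    ofReal_mul_cpow hε (inv_ne_zero (mul_ne_zero hx0 hτ0)), hxC, Int.cast_natCast]
  ring

lemma exp_neg_pi_mul_I_mul_odd_div_two {n : ℕ} (hn : Odd n) :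
    cexp (-Real.pi * I * n / 2) = -I * (ZMod.χ₄ n : ℤ) := by
  have hexp : cexp (-Real.pi * I * n / 2) = (-I) ^ n := by
    rw [← exp_neg_pi_div_two_mul_I, ← exp_nat_mul]
    congr 1
    ring
  obtain ⟨m, rfl⟩ := hn
  rw [hexp, ZMod.χ₄_eq_neg_one_pow (by lia), pow_succ, pow_mul, neg_sq, I_sq, mul_comm]
  congr 1
  rw [show (2 * m + 1) / 2 = m by lia]
  push_cast
  rfl

theorem quadraticGaussSum_two_of_odd {n : ℕ} (hn : Odd n) :
    quadraticGaussSum 2 n = (1 + I) / 2 * (1 - I * (ZMod.χ₄ n : ℤ)) * √n := by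
  have hsqrt : (0 : ℝ) < √n := Real.sqrt_pos.mpr (mod_cast hn.pos)
  have hsqrt0 : (√n : ℂ) ≠ 0 := mod_cast hsqrt.ne'
  have hroot : (-I * ((2 : ℕ) / n)) ^ (1 / 2 : ℂ) = (1 - I) / √n := by
    have hsq : ((1 - I) / √n) ^ 2 = -I * ((2 : ℕ) / n) := by
      rw [div_pow, ← ofReal_pow, Real.sq_sqrt n.cast_nonneg, ofReal_natCast]
      linear_combination I_sq / n
    rw [← hsq, one_div]
    refine sq_cpow_two_inv ?_
    rw [div_ofReal_re]
    simpa using hsqrt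
  have h := landsberg_schaar two_ne_zero hn.pos.ne' (even_two.mul_right n)
  rw [hroot] at h
  have hdual : quadraticGaussSum (-n) 2 = 1 + -I * (ZMod.χ₄ n : ℤ) := by
    rw [← exp_neg_pi_mul_I_mul_odd_div_two hn, quadraticGaussSum, Finset.sum_range_succ,
      Finset.sum_range_one]
    push_cast
    simp
  rw [hdual, div_mul_eq_mul_div, div_eq_iff hsqrt0] at h
  push_cast at h
  linear_combination (1 + I) / 2 * h + quadraticGaussSum 2 n / 2 * I_sq

end LandsbergSchaar

/-! ### Gauss sums of Jacobi symbols -/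

section GaussSums

lemma gaussSum_eq_zero_of_add_right {R R' : Type*} [CommRing R] [Fintype R] [CommRing R']
    [IsDomain R'] {χ : MulChar R R'} {ψ : AddChar R R'} {c : R} (hχ : ∀ x, χ (x + c) = χ x)
    (hψ : ψ c ≠ 1) : gaussSum χ ψ = 0 := by
  have hshift : ψ c * gaussSum χ ψ = gaussSum χ ψ := calc
    ψ c * gaussSum χ ψ = ∑ x, χ (x + c) * ψ (x + c) := by
      rw [gaussSum, Finset.mul_sum]
      exact Finset.sum_congr rfl fun x _ ↦ by rw [hχ, ψ.map_add_eq_mul]; ring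
    _ = gaussSum χ ψ := Fintype.sum_equiv (Equiv.addRight c) _ _ fun _ ↦ rfl
  exact (mul_left_eq_self₀.mp hshift).resolve_left hψ

lemma sum_addChar_sq_eq_gaussSum {F R : Type*} [Field F] [Fintype F] [DecidableEq F] [CommRing R]
    [IsDomain R] (hF : ringChar F ≠ 2) {ψ : AddChar F R} (hψ : ψ ≠ 1) :
    ∑ x, ψ (x ^ 2) = gaussSum ((quadraticChar F).ringHomComp (Int.castRingHom R)) ψ := by
  have hfiber (y : F) : ∑ x with x ^ 2 = y, ψ (x ^ 2) = (quadraticChar F y : R) * ψ y + ψ y := by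
    have hcard : ((Finset.univ.filter fun x ↦ x ^ 2 = y).card : R) = quadraticChar F y + 1 := by
      have h := quadraticChar_card_sqrts hF y
      rw [Set.toFinset_ofPred] at h
      exact_mod_cast congrArg (Int.cast (R := R)) h
    rw [Finset.sum_congr rfl fun x hx ↦ by rw [(Finset.mem_filter.mp hx).2], Finset.sum_const,
      nsmul_eq_mul, hcard, add_mul, one_mul]
  rw [← Finset.sum_fiberwise Finset.univ (fun x ↦ x ^ 2)]
  simp only [hfiber, Finset.sum_add_distrib, AddChar.sum_eq_zero_of_ne_one hψ, add_zero]
  rfl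

lemma mulShift_stdAddChar_intCast (n : ℕ) [NeZero n] (k j : ℤ) :
    ZMod.stdAddChar.mulShift (k : ZMod n) j = cexp (2 * Real.pi * I * j * k / n) := by
  rw [AddChar.mulShift_apply, ← Int.cast_mul, ZMod.stdAddChar_coe]
  push_cast
  ring_nf

lemma mulShift_stdAddChar_apply (n : ℕ) [NeZero n] (k : ℤ) (x : ZMod n) :
    ZMod.stdAddChar.mulShift (k : ZMod n) x = cexp (2 * Real.pi * I * x.val * k / n) := by
  have h := mulShift_stdAddChar_intCast n k x.val
  rwa [Int.cast_natCast, ZMod.natCast_zmod_val, Int.cast_natCast] at h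

lemma gaussSum_stdAddChar_mul {m n : ℕ} [NeZero m] [NeZero n] (hmn : m.Coprime n)
    {χ : DirichletCharacter ℂ (m * n)} {χ₁ : DirichletCharacter ℂ m} {χ₂ : DirichletCharacter ℂ n}
    (hχ : ∀ a : ℤ, χ a = χ₁ a * χ₂ a) (k : ℤ) :
    gaussSum χ (ZMod.stdAddChar.mulShift k) = χ₁ n * χ₂ m *
      (gaussSum χ₁ (ZMod.stdAddChar.mulShift k) * gaussSum χ₂ (ZMod.stdAddChar.mulShift k)) := by
  let e (x : ZMod m × ZMod n) : ℤ := n * x.1.val + m * x.2.val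
  have he₁ (x : ZMod m × ZMod n) : (e x : ZMod m) = n * x.1 := by simp [e]
  have he₂ (x : ZMod m × ZMod n) : (e x : ZMod n) = m * x.2 := by simp [e]
  have he : Function.Bijective fun x ↦ (e x : ZMod (m * n)) := by
    refine (Fintype.bijective_iff_injective_and_card _).mpr ⟨fun x y hxy ↦ ?_, by simp [ZMod.card]⟩
    have h₁ := congrArg (ZMod.castHom (dvd_mul_right m n) (ZMod m)) hxy
    have h₂ := congrArg (ZMod.castHom (dvd_mul_left n m) (ZMod n)) hxy
    simp only [map_intCast, he₁, he₂] at h₁ h₂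
    exact Prod.ext (((ZMod.isUnit_iff_coprime n m).mpr hmn.symm).mul_left_cancel h₁)
      (((ZMod.isUnit_iff_coprime m n).mpr hmn).mul_left_cancel h₂)
  have hexp (x : ZMod m × ZMod n) : ZMod.stdAddChar.mulShift (k : ZMod (m * n)) (e x) =
      ZMod.stdAddChar.mulShift (k : ZMod m) x.1 * ZMod.stdAddChar.mulShift (k : ZMod n) x.2 := by
    obtain ⟨x, y⟩ := x
    have hm : (m : ℂ) ≠ 0 := NeZero.ne _
    have hn : (n : ℂ) ≠ 0 := NeZero.ne _
    rw [mulShift_stdAddChar_intCast, mulShift_stdAddChar_apply, mulShift_stdAddChar_apply,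
      ← exp_add]
    congr 1
    push_cast [e]
    field_simp
  rw [gaussSum, ← he.sum_comp, gaussSum, gaussSum, Finset.sum_mul_sum, ← Fintype.sum_prod_type',
    Finset.mul_sum]
  refine Fintype.sum_congr _ _ fun x ↦ ?_
  rw [hχ, hexp, he₁, he₂, map_mul, map_mul]
  ring

/-- The Jacobi symbol `(·/n)` as a complex Dirichlet character modulo `n`. -/
def jacobiChar (n : ℕ) [NeZero n] : DirichletCharacter ℂ n where
  toFun x := (jacobiSym x.val n : ℤ)
  map_one' := by
    rw [ZMod.val_one_eq_one_mod, Int.natCast_mod, ← jacobiSym.mod_left]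
    simp
  map_mul' x y := by
    rw [ZMod.val_mul, Int.natCast_mod, ← jacobiSym.mod_left, Nat.cast_mul, jacobiSym.mul_left,
      Int.cast_mul]
  map_nonunit' x hx := by
    rw [Int.cast_eq_zero, jacobiSym.eq_zero_iff_not_coprime, Int.gcd_natCast_natCast]
    rwa [← ZMod.natCast_zmod_val x, ZMod.isUnit_iff_coprime] at hx

lemma jacobiChar_intCast (n : ℕ) [NeZero n] (a : ℤ) : jacobiChar n a = (jacobiSym a n : ℤ) := by
  change ((jacobiSym ((a : ZMod n).val : ℤ) n : ℤ) : ℂ) = _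
  rw [ZMod.val_intCast, ← jacobiSym.mod_left]

lemma jacobiTau_eq_gaussSum (n k : ℕ) [NeZero n] :
    jacobiTau n k = gaussSum (jacobiChar n) (ZMod.stdAddChar.mulShift (k : ZMod n)) := by
  rw [jacobiTau, gaussSum, sum_range_eq_sum_zmod]
  refine Fintype.sum_congr _ _ fun x ↦ ?_
  have h := mulShift_stdAddChar_apply n k x
  rw [Int.cast_natCast, Int.cast_natCast] at h
  rw [h]
  rfl

lemma jacobiTau_mul {m n : ℕ} (hm : m ≠ 0) (hn : n ≠ 0) (hmn : m.Coprime n) (k : ℕ) :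
    jacobiTau (m * n) k =
      (jacobiSym n m : ℤ) * (jacobiSym m n : ℤ) * (jacobiTau m k * jacobiTau n k) := by
  have : NeZero m := ⟨hm⟩
  have : NeZero n := ⟨hn⟩
  have hχ (a : ℤ) : jacobiChar (m * n) a = jacobiChar m a * jacobiChar n a := by
    simp only [jacobiChar_intCast, jacobiSym.mul_right, Int.cast_mul]
  have h := gaussSum_stdAddChar_mul hmn hχ k
  simp only [Int.cast_natCast, ← jacobiTau_eq_gaussSum] at h
  rw [h, ← jacobiChar_intCast, ← jacobiChar_intCast, Int.cast_natCast, Int.cast_natCast]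

lemma jacobiTau_prime {p : ℕ} (hp : p.Prime) (hp2 : p ≠ 2) {k : ℕ} (hk : ¬ p ∣ k) :
    jacobiTau p k = (jacobiSym k p : ℤ) * quadraticGaussSum 2 p := by
  have : Fact p.Prime := ⟨hp⟩
  have hχ : jacobiChar p = (quadraticChar (ZMod p)).ringHomComp (Int.castRingHom ℂ) := by
    ext x
    rw [← ZMod.intCast_zmod_cast (x : ZMod p), jacobiChar_intCast,
      ← jacobiSym.legendreSym.to_jacobiSym]
    rfl
  have hsq (x : ZMod p) :
      cexp (Real.pi * I * (2 : ℤ) * x.val ^ 2 / p) = ZMod.stdAddChar (x ^ 2) := by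
    have h := ZMod.stdAddChar_coe (N := p) (x.val ^ 2)
    push_cast [ZMod.natCast_zmod_val] at h
    rw [h]
    push_cast
    ring_nf
  have hk' : IsUnit (k : ZMod p) :=
    (ZMod.isUnit_iff_coprime k p).mpr (hp.coprime_iff_not_dvd.mpr hk).symm
  have hJ : (jacobiSym k p : ℂ) ^ 2 = 1 := by
    have h := jacobiSym.sq_one (a := k) (b := p)
      (by rw [Int.gcd_natCast_natCast]; exact (hp.coprime_iff_not_dvd.mpr hk).symm)
    exact_mod_cast h
  have hshift := gaussSum_mulShift (jacobiChar p) (ZMod.stdAddChar (N := p)) hk'.unit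
  rw [hk'.unit_spec, ← jacobiTau_eq_gaussSum, ← Int.cast_natCast k, jacobiChar_intCast, hχ,
    ← sum_addChar_sq_eq_gaussSum (by rwa [ZMod.ringChar_zmod_n])
      (by simpa using ZMod.isPrimitive_stdAddChar p one_ne_zero)] at hshift
  rw [quadraticGaussSum, sum_range_eq_sum_zmod, Fintype.sum_congr _ _ hsq, ← hshift, ← mul_assoc,
    ← sq, hJ, one_mul]

lemma jacobiTau_prime_pow_eq_zero {p : ℕ} (hp : p.Prime) {e k : ℕ} (hk : ¬ p ^ e ∣ k) :
    jacobiTau (p ^ (e + 1)) k = 0 := by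
  have : NeZero p := ⟨hp.ne_zero⟩
  rw [jacobiTau_eq_gaussSum]
  refine gaussSum_eq_zero_of_add_right (c := ((p : ℤ) : ZMod (p ^ (e + 1))))
    (fun x ↦ ?_) fun h ↦ hk ?_
  · rw [← ZMod.intCast_zmod_cast x, ← Int.cast_add, jacobiChar_intCast, jacobiChar_intCast,
      jacobiSym.pow_right, jacobiSym.pow_right, jacobiSym.mod_left, Int.add_emod_right,
      ← jacobiSym.mod_left]
  · rw [AddChar.mulShift_apply, ← AddChar.map_zero_eq_one (ZMod.stdAddChar (N := p ^ (e + 1)))]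
      at h
    replace h := ZMod.injective_stdAddChar h
    rw [Int.cast_natCast, ← Nat.cast_mul, ZMod.natCast_eq_zero_iff, pow_succ] at h
    exact Nat.dvd_of_mul_dvd_mul_right hp.pos h

lemma chi_four_cases_of_odd {n : ℕ} (hn : Odd n) :
    n % 4 = 1 ∧ ZMod.χ₄ n = 1 ∨ n % 4 = 3 ∧ ZMod.χ₄ n = -1 := by
  have hmod : n % 4 = 1 ∨ n % 4 = 3 := by
    have := Nat.odd_iff.mp hn
    lia
  exact hmod.imp (fun h ↦ ⟨h, ZMod.χ₄_nat_one_mod_four h⟩)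
    fun h ↦ ⟨h, ZMod.χ₄_nat_three_mod_four h⟩

/-- The factor in front of `jacobiTau` makes `jacobiG` multiplicative by cancelling the sign
`(m/n)(n/m)` of quadratic reciprocity. -/
lemma jacobiG_mul {m n : ℕ} (hm : Odd m) (hn : Odd n) (hmn : m.Coprime n) (k : ℕ) :
    jacobiG (m * n) k = jacobiG m k * jacobiG n k := by
  have hsq : (jacobiSym n m : ℂ) ^ 2 = 1 := by
    have h := jacobiSym.sq_one (a := n) (b := m) (by rwa [Int.gcd_natCast_natCast, Nat.gcd_comm])
    exact_mod_cast h
  rw [jacobiG, jacobiG, jacobiG, jacobiTau_mul hm.pos.ne' hn.pos.ne' hmn,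
    jacobiSym.at_neg_one hm, jacobiSym.at_neg_one hn, jacobiSym.at_neg_one (hm.mul hn),
    Nat.cast_mul m n, map_mul]
  obtain ⟨hm4, hχm⟩ | ⟨hm4, hχm⟩ := chi_four_cases_of_odd hm
  · rw [jacobiSym.quadratic_reciprocity_one_mod_four hm4 hn, hχm]
    push_cast
    linear_combination ((1 - I) / 2 + ZMod.χ₄ n * (1 + I) / 2) *
      jacobiTau m k * jacobiTau n k * hsq
  obtain ⟨hn4, hχn⟩ | ⟨hn4, hχn⟩ := chi_four_cases_of_odd hn
  · rw [← jacobiSym.quadratic_reciprocity_one_mod_four hn4 hm, hχm, hχn]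
    push_cast
    linear_combination -I * jacobiTau m k * jacobiTau n k * hsq
  · rw [jacobiSym.quadratic_reciprocity_three_mod_four hm4 hn4, hχm, hχn]
    push_cast
    linear_combination -jacobiTau m k * jacobiTau n k * (hsq + I_sq)

lemma jacobiG_prime {p : ℕ} (hp : p.Prime) (hp2 : p ≠ 2) {k : ℕ} (hk : ¬ p ∣ k) :
    jacobiG p k = (jacobiSym k p : ℤ) * √p := by
  have hodd := hp.odd_of_ne_two hp2
  have hχ : (ZMod.χ₄ p : ℂ) ^ 2 = 1 := by
    obtain ⟨-, h⟩ | ⟨-, h⟩ := chi_four_cases_of_odd hodd <;> simp [h]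
  rw [jacobiG, jacobiTau_prime hp hp2 hk, quadraticGaussSum_two_of_odd hodd,
    jacobiSym.at_neg_one hodd]
  linear_combination (jacobiSym k p * √p : ℂ) *
    (hχ / 2 + ((ZMod.χ₄ p - 1) * (1 - I * ZMod.χ₄ p) / 4 - ZMod.χ₄ p ^ 2 / 2) * I_sq)

lemma jacobiG_prime_pow_eq_zero {p : ℕ} (hp : p.Prime) {e k : ℕ} (hk : ¬ p ^ e ∣ k) :
    jacobiG (p ^ (e + 1)) k = 0 := by
  rw [jacobiG, jacobiTau_prime_pow_eq_zero hp hk, mul_zero]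

end GaussSums

/-! ### Euler products -/

section EulerProducts

lemma sum_range_norm_le_prod_primesBelow {F : Type*} [NormedField F] {f : ℕ → F} (h0 : f 0 = 0)
    (h1 : f 1 = 1) (hmul : ∀ {m n : ℕ}, m.Coprime n → f (m * n) = f m * f n)
    (hloc : ∀ {p : ℕ}, p.Prime → Summable fun e : ℕ ↦ ‖f (p ^ e)‖) (N : ℕ) :
    ∑ n ∈ Finset.range N, ‖f n‖ ≤ ∏ p ∈ N.primesBelow, ∑' e : ℕ, ‖f (p ^ e)‖ := by
  have hsmooth : HasSum (N.smoothNumbers.indicator fun n ↦ ‖f n‖)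
      (∏ p ∈ N.primesBelow, ∑' e : ℕ, ‖f (p ^ e)‖) :=
    hasSum_subtype_iff_indicator.mp
      (EulerProduct.summable_and_hasSum_smoothNumbers_prod_primesBelow_tsum (f := fun n ↦ ‖f n‖)
        (by simp [h1]) (fun h ↦ by simp [hmul h]) (fun hp ↦ by simpa using hloc hp) N).2
  calc ∑ n ∈ Finset.range N, ‖f n‖
      = ∑ n ∈ Finset.range N, N.smoothNumbers.indicator (fun n ↦ ‖f n‖) n := by
        refine Finset.sum_congr rfl fun n hn ↦ ?_
        obtain rfl | hpos := n.eq_zero_or_pos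
        · simp [h0, Set.indicator]
        · rw [Set.indicator_of_mem (Nat.mem_smoothNumbers_of_lt hpos (Finset.mem_range.mp hn))]
    _ ≤ _ := sum_le_hasSum _ (fun n _ ↦ Set.indicator_nonneg (fun _ _ ↦ norm_nonneg _) n) hsmooth

lemma summable_norm_of_summable_tsum_primePow {F : Type*} [NormedField F] {f : ℕ → F}
    (h0 : f 0 = 0) (h1 : f 1 = 1) (hmul : ∀ {m n : ℕ}, m.Coprime n → f (m * n) = f m * f n)
    (hloc : ∀ {p : ℕ}, p.Prime → Summable fun e : ℕ ↦ ‖f (p ^ e)‖)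
    (hprimes : Summable fun p : Nat.Primes ↦ ∑' e : ℕ, ‖f (p ^ (e + 1))‖) :
    Summable fun n ↦ ‖f n‖ := by
  have hnonneg (p : ℕ) : 0 ≤ ∑' e : ℕ, ‖f (p ^ (e + 1))‖ := tsum_nonneg fun _ ↦ norm_nonneg _
  refine summable_of_sum_range_le
    (c := Real.exp (∑' p : Nat.Primes, ∑' e : ℕ, ‖f (p ^ (e + 1))‖)) (fun n ↦ norm_nonneg _)
    fun N ↦ ?_
  calc ∑ n ∈ Finset.range N, ‖f n‖
      ≤ ∏ p ∈ N.primesBelow, ∑' e : ℕ, ‖f (p ^ e)‖ :=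
        sum_range_norm_le_prod_primesBelow h0 h1 hmul hloc N
    _ = ∏ p ∈ N.primesBelow, (1 + ∑' e : ℕ, ‖f (p ^ (e + 1))‖) := by
        refine Finset.prod_congr rfl fun p hp ↦ ?_
        rw [(hloc (Nat.prime_of_mem_primesBelow hp)).tsum_eq_zero_add, pow_zero, h1, norm_one]
    _ ≤ Real.exp (∑ p ∈ N.primesBelow, ∑' e : ℕ, ‖f (p ^ (e + 1))‖) :=
        Real.prod_one_add_le_exp_sum _ hnonneg
    _ = Real.exp (∑ p ∈ N.primesBelow.subtype Nat.Prime, ∑' e : ℕ, ‖f (p ^ (e + 1))‖) := by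
        rw [Finset.sum_subtype_of_mem (fun p ↦ ∑' e : ℕ, ‖f (p ^ (e + 1))‖)
          fun p hp ↦ Nat.prime_of_mem_primesBelow hp]
    _ ≤ _ := Real.exp_le_exp.mpr
        (Summable.sum_le_tsum (f := fun p : Nat.Primes ↦ ∑' e : ℕ, ‖f (p ^ (e + 1))‖) _
          (fun p _ ↦ hnonneg p) hprimes)

lemma norm_natCast_cpow_neg_le {t : ℂ} (ht : 0 < t.re) {n : ℕ} (hn : 2 ≤ n) :
    ‖(n : ℂ) ^ (-t)‖ ≤ (2 : ℝ) ^ (-t.re) := by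
  rw [norm_natCast_cpow_of_pos (by lia), neg_re]
  exact Real.rpow_le_rpow_of_nonpos two_pos (mod_cast hn) (by linarith)

lemma two_rpow_neg_lt_one {x : ℝ} (hx : 0 < x) : (2 : ℝ) ^ (-x) < 1 :=
  Real.rpow_lt_one_of_one_lt_of_neg one_lt_two (neg_lt_zero.mpr hx)

lemma one_sub_natCast_cpow_neg_ne_zero {t : ℂ} (ht : 0 < t.re) {n : ℕ} (hn : 2 ≤ n) :
    1 - (n : ℂ) ^ (-t) ≠ 0 := by
  refine sub_ne_zero.mpr fun h ↦ ?_
  have hlt := (norm_natCast_cpow_neg_le ht hn).trans_lt (two_rpow_neg_lt_one ht)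
  simp [← h] at hlt

lemma norm_inv_one_sub_natCast_cpow_neg_le {t : ℂ} (ht : 0 < t.re) {n : ℕ} (hn : 2 ≤ n) :
    ‖(1 - (n : ℂ) ^ (-t))⁻¹‖ ≤ (1 - (2 : ℝ) ^ (-t.re))⁻¹ := by
  have hpos := sub_pos.mpr (two_rpow_neg_lt_one ht)
  rw [norm_inv]
  refine inv_anti₀ hpos ?_
  calc 1 - (2 : ℝ) ^ (-t.re) ≤ ‖(1 : ℂ)‖ - ‖(n : ℂ) ^ (-t)‖ := by
        rw [norm_one]
        exact sub_le_sub_left (norm_natCast_cpow_neg_le ht hn) 1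
    _ ≤ ‖1 - (n : ℂ) ^ (-t)‖ := norm_sub_norm_le _ _

lemma Erec_one_factor_eq {K : Type*} [Field K] {P Q c : K} (hP : P ≠ 0) (hQ : Q ≠ 0)
    (hQ1 : 1 - Q⁻¹ ≠ 0) (hPc : 1 + c * P⁻¹ ≠ 0) (hPQc : 1 + c * (P * Q)⁻¹ ≠ 0) :
    1 + (c * P - c ^ 2 * Q + c ^ 2) / ((P * Q + c) * (P + c) * (Q - 1)) =
      (1 + c * P⁻¹ * (1 - Q⁻¹)⁻¹) * (1 + c * P⁻¹)⁻¹ * (1 + c * (P * Q)⁻¹)⁻¹ := by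
  have hQ1' : 1 - Q⁻¹ = (Q - 1) / Q := by field_simp
  have hPc' : 1 + c * P⁻¹ = (P + c) / P := by field_simp
  have hPQc' : 1 + c * (P * Q)⁻¹ = (P * Q + c) / (P * Q) := by field_simp
  rw [hQ1'] at hQ1
  rw [hPc'] at hPc
  rw [hPQc'] at hPQc
  have := (div_ne_zero_iff.mp hQ1).1
  have := (div_ne_zero_iff.mp hPc).1
  have := (div_ne_zero_iff.mp hPQc).1
  rw [hQ1', hPc', hPQc']
  field_simp
  ring

variable {M : ℕ} (χ : DirichletCharacter ℂ M)

lemma norm_dirichlet_mul_cpow_neg_lt_one {w : ℂ} (hw : 0 < w.re) {n : ℕ} (hn : 2 ≤ n) :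
    ‖χ n * (n : ℂ) ^ (-w)‖ < 1 := by
  rw [norm_mul]
  exact (mul_le_of_le_one_left (norm_nonneg _) (χ.norm_le_one _)).trans_lt
    ((norm_natCast_cpow_neg_le hw hn).trans_lt (two_rpow_neg_lt_one hw))

lemma one_add_dirichlet_mul_cpow_neg_ne_zero {w : ℂ} (hw : 0 < w.re) {n : ℕ} (hn : 2 ≤ n) :
    1 + χ n * (n : ℂ) ^ (-w) ≠ 0 := fun h ↦ by
  simpa [eq_neg_of_add_eq_zero_right h] using norm_dirichlet_mul_cpow_neg_lt_one χ hw hn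

lemma one_sub_dirichlet_mul_cpow_neg_ne_zero {w : ℂ} (hw : 0 < w.re) {n : ℕ} (hn : 2 ≤ n) :
    1 - χ n * (n : ℂ) ^ (-w) ≠ 0 := fun h ↦ by
  simpa [← sub_eq_zero.mp h] using norm_dirichlet_mul_cpow_neg_lt_one χ hw hn

/-- The factor at a prime `p ∤ 2k` of the Euler product of
`∑ G((·/n),k) ψ(n) a_t(n) n^{-(s+1/2)}`, where `χ = (4k/·)ψ`. -/
def unramifiedFactor (s t : ℂ) (p : ℕ) : ℂ :=
  1 + χ p * (p : ℂ) ^ (-s) * (1 - (p : ℂ) ^ (-t))⁻¹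

lemma norm_dirichlet_mul_cpow_neg_mul_inv_le (s : ℂ) {t : ℂ} (ht : 0 < t.re) {p : ℕ} (hp : 2 ≤ p) :
    ‖χ p * (p : ℂ) ^ (-s) * (1 - (p : ℂ) ^ (-t))⁻¹‖ ≤
      (p : ℝ) ^ (-s.re) * (1 - (2 : ℝ) ^ (-t.re))⁻¹ := by
  rw [norm_mul, norm_mul, norm_natCast_cpow_of_pos (by lia), neg_re]
  gcongr
  · exact mul_le_of_le_one_left (by positivity) (χ.norm_le_one _)
  · exact norm_inv_one_sub_natCast_cpow_neg_le ht hp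

lemma multipliable_unramifiedFactor {s t : ℂ} (hs : 1 < s.re) (ht : 0 < t.re) :
    Multipliable fun p : Nat.Primes ↦ unramifiedFactor χ s t p :=
  multipliable_one_add_of_summable <|
    ((Nat.Primes.summable_rpow.mpr (neg_lt_neg hs)).mul_right _).of_nonneg_of_le
      (fun _ ↦ norm_nonneg _) fun p ↦ norm_dirichlet_mul_cpow_neg_mul_inv_le χ s ht p.prop.two_le

variable [NeZero M]

lemma LFunction_ne_zero_of_one_lt_re {w : ℂ} (hw : 1 < w.re) : χ.LFunction w ≠ 0 :=
  χ.LFunction_ne_zero_of_one_le_re (.inr (by rintro rfl; simp at hw)) hw.le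

lemma one_lt_re_two_mul {w : ℂ} (hw : 1 < w.re) : 1 < (2 * w).re := by
  simp only [mul_re, re_ofNat, im_ofNat, zero_mul, sub_zero]
  linarith

lemma LFunction_div_LFunction_sq_ne_zero {w : ℂ} (hw : 1 < w.re) :
    χ.LFunction w / (χ ^ 2).LFunction (2 * w) ≠ 0 :=
  div_ne_zero (LFunction_ne_zero_of_one_lt_re χ hw)
    (LFunction_ne_zero_of_one_lt_re _ (one_lt_re_two_mul hw))

lemma hasProd_one_add_dirichlet_mul_cpow_neg {w : ℂ} (hw : 1 < w.re) :
    HasProd (fun p : Nat.Primes ↦ 1 + χ p * (p : ℂ) ^ (-w))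
      (χ.LFunction w / (χ ^ 2).LFunction (2 * w)) := by
  have hw2 := one_lt_re_two_mul hw
  have hL := DirichletCharacter.LSeries_eulerProduct_hasProd χ hw
  have hL2 := DirichletCharacter.LSeries_eulerProduct_hasProd (χ ^ 2) hw2
  rw [← DirichletCharacter.LFunction_eq_LSeries _ hw] at hL
  rw [← DirichletCharacter.LFunction_eq_LSeries _ hw2] at hL2
  rw [div_eq_mul_inv]
  refine (hL.mul (hL2.inv₀ (LFunction_ne_zero_of_one_lt_re _ hw2))).congr_fun fun p ↦ ?_
  have hsq : (χ ^ 2) p * (p : ℂ) ^ (-(2 * w)) = (χ p * (p : ℂ) ^ (-w)) ^ 2 := by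
    rw [MulChar.pow_apply' _ two_ne_zero, mul_pow, ← cpow_nat_mul, Nat.cast_ofNat, mul_neg]
  have hne := one_sub_dirichlet_mul_cpow_neg_ne_zero χ (one_pos.trans hw) p.prop.two_le
  rw [hsq, inv_inv]
  field_simp
  ring

lemma hasProd_inv_one_add_dirichlet_mul_cpow_neg {w : ℂ} (hw : 1 < w.re) :
    HasProd (fun p : Nat.Primes ↦ (1 + χ p * (p : ℂ) ^ (-w))⁻¹)
      (χ.LFunction w / (χ ^ 2).LFunction (2 * w))⁻¹ :=
  (hasProd_one_add_dirichlet_mul_cpow_neg χ hw).inv₀ (LFunction_div_LFunction_sq_ne_zero χ hw)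

lemma Erec_one_eq {s t : ℂ} (hs : 1 < s.re) (ht : 0 < t.re) :
    Erec (fun m ↦ χ m) s t 1 = (∏' p : Nat.Primes, unramifiedFactor χ s t p) *
      (χ.LFunction s / (χ ^ 2).LFunction (2 * s))⁻¹ *
      (χ.LFunction (s + t) / (χ ^ 2).LFunction (2 * (s + t)))⁻¹ := by
  have hst : 1 < (s + t).re := by
    rw [add_re]
    linarith
  rw [← (((multipliable_unramifiedFactor χ hs ht).hasProd.mul
    (hasProd_inv_one_add_dirichlet_mul_cpow_neg χ hs)).mul
    (hasProd_inv_one_add_dirichlet_mul_cpow_neg χ hst)).tprod_eq, Erec]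
  refine tprod_congr fun p ↦ ?_
  have hp : (p : ℂ) ≠ 0 := mod_cast p.prop.ne_zero
  have hp2 := p.prop.two_le
  have hQ1 := one_sub_natCast_cpow_neg_ne_zero ht hp2
  have hPc := one_add_dirichlet_mul_cpow_neg_ne_zero χ (one_pos.trans hs) hp2
  have hPQc := one_add_dirichlet_mul_cpow_neg_ne_zero χ (one_pos.trans hst) hp2
  simp only [unramifiedFactor, cpow_neg, cpow_add _ _ hp] at hQ1 hPc hPQc ⊢
  have hpow (w : ℂ) : (p : ℂ) ^ w ≠ 0 := fun h ↦ hp ((cpow_eq_zero_iff _ _).mp h).1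
  exact Erec_one_factor_eq (hpow s) (hpow t) hQ1 hPc hPQc

lemma Erec_succ_succ {s t : ℂ} (N : ℕ) (h : 1 < (s + ((N + 2 : ℕ) : ℂ) * t).re) :
    Erec (fun m ↦ χ m) s t (N + 2) = Erec (fun m ↦ χ m) s t (N + 1) *
      (χ.LFunction (s + ((N + 2 : ℕ) : ℂ) * t) /
        (χ ^ 2).LFunction (2 * (s + ((N + 2 : ℕ) : ℂ) * t)))⁻¹ := by
  rw [← (hasProd_inv_one_add_dirichlet_mul_cpow_neg χ h).tprod_eq, Erec]
  push_cast
  rfl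

lemma prod_LFunction_div_mul_Erec {s t : ℂ} (hs : 1 < s.re) (ht : 0 < t.re) {N : ℕ}
    (hN : 1 ≤ N) :
    (∏ j ∈ Finset.range (N + 1), χ.LFunction (s + j * t) /
      (χ ^ 2).LFunction (2 * s + 2 * j * t)) * Erec (fun m ↦ χ m) s t N =
      ∏' p : Nat.Primes, unramifiedFactor χ s t p := by
  have hre (j : ℕ) : 1 < (s + j * t).re := by
    rw [add_re, ← ofReal_natCast, re_ofReal_mul]
    nlinarith [mul_nonneg j.cast_nonneg ht.le]
  have hne (j : ℕ) := LFunction_div_LFunction_sq_ne_zero χ (hre j)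
  have hdouble (j : ℕ) : 2 * s + 2 * j * t = 2 * (s + j * t) := by ring
  simp only [hdouble]
  induction N, hN using Nat.le_induction with
  | base =>
    have h0 := hne 0
    have h1 := hne 1
    rw [Finset.prod_range_succ, Finset.prod_range_one, Erec_one_eq χ hs ht]
    simp only [Nat.cast_zero, zero_mul, add_zero, Nat.cast_one, one_mul] at h0 h1 ⊢
    rw [mul_assoc (∏' _, _), ← mul_inv, mul_left_comm, mul_inv_cancel₀ (mul_ne_zero h0 h1), mul_one]
  | succ N hN ih =>
    obtain ⟨N, rfl⟩ := Nat.exists_eq_add_of_le' hN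
    rw [Erec_succ_succ χ N (hre _), Finset.prod_range_succ, ← ih, mul_mul_mul_comm,
      mul_inv_cancel₀ (hne (N + 2)), mul_one]

end EulerProducts

/-! ### The Dirichlet series -/

section GaussSeries

lemma aF_mul_of_coprime (t : ℂ) {m n : ℕ} (hmn : m.Coprime n) : aF t (m * n) = aF t m * aF t n := by
  rw [aF, hmn.primeFactors_mul, Finset.prod_union hmn.disjoint_primeFactors]
  rfl

lemma aF_prime (t : ℂ) {p : ℕ} (hp : p.Prime) : aF t p = (1 - (p : ℂ) ^ (-t))⁻¹ := by
  simp [aF, hp.primeFactors]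

lemma aF_pow (t : ℂ) (n : ℕ) {e : ℕ} (he : e ≠ 0) : aF t (n ^ e) = aF t n := by
  rw [aF, Nat.primeFactors_pow n he, aF]

lemma ofReal_sqrt_mul_cpow_neg_add_half {n : ℕ} (hn : n ≠ 0) (s : ℂ) :
    (√n : ℂ) * (n : ℂ) ^ (-(s + 1 / 2)) = (n : ℂ) ^ (-s) := by
  have hsqrt : (√n : ℂ) = (n : ℂ) ^ (1 / 2 : ℂ) := by
    rw [Real.sqrt_eq_rpow, ofReal_cpow n.cast_nonneg]
    push_cast
    rfl
  rw [hsqrt, ← cpow_add _ _ (Nat.cast_ne_zero.mpr hn)]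
  congr 1
  ring

lemma jacobiG_prime_pow_eq_zero_of_lt {p : ℕ} (hp : p.Prime) {k e : ℕ} (hk : k ≠ 0) (he : k < e) :
    jacobiG (p ^ e) k = 0 := by
  obtain ⟨e, rfl⟩ := Nat.exists_eq_add_one_of_ne_zero (Nat.ne_zero_of_lt he)
  refine jacobiG_prime_pow_eq_zero hp fun h ↦ ?_
  exact (Nat.le_of_dvd (Nat.pos_of_ne_zero hk) h).not_gt
    ((Nat.le_of_lt_succ he).trans_lt (Nat.lt_pow_self hp.one_lt))

variable {q : ℕ} (ψ : DirichletCharacter ℂ q) (k : ℕ) (s t : ℂ)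

/-- The summand `G((·/n),k) ψ(n) a_t(n) n^{-(s+1/2)}` of the Dirichlet series, extended by zero to
even `n` so that it is multiplicative on all of `ℕ`. -/
def gaussTerm (n : ℕ) : ℂ :=
  if Odd n then jacobiG n k * ψ n * aF t n * (n : ℂ) ^ (-(s + 1 / 2)) else 0

lemma gaussTerm_of_odd {n : ℕ} (hn : Odd n) :
    gaussTerm ψ k s t n = jacobiG n k * ψ n * aF t n * (n : ℂ) ^ (-(s + 1 / 2)) :=
  if_pos hn

lemma gaussTerm_of_not_odd {n : ℕ} (hn : ¬ Odd n) : gaussTerm ψ k s t n = 0 :=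
  if_neg hn

lemma gaussTerm_zero : gaussTerm ψ k s t 0 = 0 :=
  gaussTerm_of_not_odd ψ k s t (by decide)

lemma gaussTerm_one : gaussTerm ψ k s t 1 = 1 := by
  simp only [gaussTerm_of_odd ψ k s t odd_one, jacobiG, jacobiTau, aF, Finset.sum_range_one,
    jacobiSym.one_right, Nat.primeFactors_one, Finset.prod_empty, Nat.cast_zero, mul_zero,
    zero_mul, zero_div, exp_zero, Nat.cast_one, one_cpow, map_one, Int.cast_one, one_mul, mul_one]
  ring

lemma gaussTerm_mul {m n : ℕ} (hmn : m.Coprime n) :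
    gaussTerm ψ k s t (m * n) = gaussTerm ψ k s t m * gaussTerm ψ k s t n := by
  by_cases hm : Odd m
  · by_cases hn : Odd n
    · rw [gaussTerm_of_odd _ _ _ _ hm, gaussTerm_of_odd _ _ _ _ hn,
        gaussTerm_of_odd _ _ _ _ (hm.mul hn), jacobiG_mul hm hn hmn, aF_mul_of_coprime t hmn,
        Nat.cast_mul, map_mul, Nat.cast_mul, natCast_mul_natCast_cpow]
      ring
    · rw [gaussTerm_of_not_odd _ _ _ _ hn, mul_zero,
        gaussTerm_of_not_odd _ _ _ _ fun h ↦ hn (Nat.odd_mul.mp h).2]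
  · rw [gaussTerm_of_not_odd _ _ _ _ hm, zero_mul,
      gaussTerm_of_not_odd _ _ _ _ fun h ↦ hm (Nat.odd_mul.mp h).1]

variable {k}

lemma gaussTerm_eq_zero_of_jacobiG_eq_zero {n : ℕ} (h : jacobiG n k = 0) :
    gaussTerm ψ k s t n = 0 := by
  simp [gaussTerm, h]

lemma gaussTerm_prime_pow_eq_zero {p : ℕ} (hp : p.Prime) (hpk : ¬ p ∣ k) {e : ℕ} (he : e ≠ 0) :
    gaussTerm ψ k s t (p ^ (e + 1)) = 0 :=
  gaussTerm_eq_zero_of_jacobiG_eq_zero ψ s t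
    (jacobiG_prime_pow_eq_zero hp fun h ↦ hpk ((dvd_pow_self p he).trans h))

lemma summable_norm_gaussTerm_prime_pow (hk : k ≠ 0) {p : ℕ} (hp : p.Prime) :
    Summable fun e : ℕ ↦ ‖gaussTerm ψ k s t (p ^ e)‖ :=
  summable_of_ne_finset_zero (s := Finset.range (k + 1)) fun e he ↦ by
    rw [Finset.mem_range, Nat.lt_succ_iff, not_le] at he
    rw [gaussTerm_eq_zero_of_jacobiG_eq_zero ψ s t (jacobiG_prime_pow_eq_zero_of_lt hp hk he),
      norm_zero]

lemma tsum_gaussTerm_two_pow : ∑' e : ℕ, gaussTerm ψ k s t (2 ^ e) = 1 := by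
  rw [tsum_eq_single 0 fun e he ↦ gaussTerm_of_not_odd _ _ _ _ ?_, pow_zero, gaussTerm_one]
  exact Nat.not_odd_iff_even.mpr (even_two.pow_of_ne_zero he)

variable (k) in
/-- The factor at an odd prime `p ∣ k` of the Euler product of `gaussTerm`. The factor of `Pkt` at
`p` is exactly this expression. -/
def ramifiedFactor (p : ℕ) : ℂ :=
  1 + aF t p * ∑' j : ℕ, if 1 ≤ j then
    jacobiG (p ^ j) k * ψ (p ^ j : ℕ) * (p : ℂ) ^ (-(j : ℂ) * (s + 1 / 2)) else 0

lemma tsum_gaussTerm_prime_pow_eq_ramifiedFactor (hk : k ≠ 0) {p : ℕ} (hp : p.Prime)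
    (hp2 : p ≠ 2) : ∑' e : ℕ, gaussTerm ψ k s t (p ^ e) = ramifiedFactor ψ k s t p := by
  rw [(summable_norm_gaussTerm_prime_pow ψ s t hk hp).of_norm.tsum_eq_add_tsum_ite 0, pow_zero,
    gaussTerm_one, ramifiedFactor, ← tsum_mul_left]
  congr 1
  refine tsum_congr fun e ↦ ?_
  obtain rfl | he := eq_or_ne e 0
  · simp
  have hcpow : ((p ^ e : ℕ) : ℂ) ^ (-(s + 1 / 2)) = (p : ℂ) ^ (-(e : ℂ) * (s + 1 / 2)) := by
    rw [Nat.cast_pow, ← natCast_cpow_natCast_mul, neg_mul, mul_neg]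
  rw [if_neg he, if_pos (Nat.one_le_iff_ne_zero.mpr he),
    gaussTerm_of_odd _ _ _ _ (hp.odd_of_ne_two hp2).pow, aF_pow t p he, hcpow]
  ring

variable {M : ℕ} {χ : DirichletCharacter ℂ M} {ψ}

lemma gaussTerm_prime (hχ : ∀ m : ℕ, Odd m → χ m = (jacobiSym k m : ℤ) * ψ m) {p : ℕ}
    (hp : p.Prime) (hp2 : p ≠ 2) (hpk : ¬ p ∣ k) :
    gaussTerm ψ k s t p = χ p * (p : ℂ) ^ (-s) * (1 - (p : ℂ) ^ (-t))⁻¹ := by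
  have hodd := hp.odd_of_ne_two hp2
  rw [gaussTerm_of_odd _ _ _ _ hodd, jacobiG_prime hp hp2 hpk, hχ p hodd, aF_prime t hp,
    ← ofReal_sqrt_mul_cpow_neg_add_half hp.ne_zero s]
  ring

lemma tsum_gaussTerm_prime_pow_eq_unramifiedFactor (hk : k ≠ 0)
    (hχ : ∀ m : ℕ, Odd m → χ m = (jacobiSym k m : ℤ) * ψ m) {p : ℕ} (hp : p.Prime) (hp2 : p ≠ 2)
    (hpk : ¬ p ∣ k) : ∑' e : ℕ, gaussTerm ψ k s t (p ^ e) = unramifiedFactor χ s t p := by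
  rw [(summable_norm_gaussTerm_prime_pow ψ s t hk hp).of_norm.tsum_eq_zero_add,
    tsum_eq_single 0 fun e he ↦ gaussTerm_prime_pow_eq_zero ψ s t hp hpk he, pow_zero,
    gaussTerm_one, zero_add, pow_one, gaussTerm_prime s t hχ hp hp2 hpk, unramifiedFactor]

lemma unramifiedFactor_eq_one {p : ℕ} (h : χ p = 0) : unramifiedFactor χ s t p = 1 := by
  simp [unramifiedFactor, h]

lemma tsum_gaussTerm_prime_pow (hk : k ≠ 0)
    (hχ : ∀ m : ℕ, Odd m → χ m = (jacobiSym k m : ℤ) * ψ m) (hχ2 : χ 2 = 0) {p : ℕ}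
    (hp : p.Prime) :
    ∑' e : ℕ, gaussTerm ψ k s t (p ^ e) = unramifiedFactor χ s t p *
      if p ∈ k.primeFactors.filter (· ≠ 2) then ramifiedFactor ψ k s t p else 1 := by
  obtain rfl | hp2 := eq_or_ne p 2
  · rw [tsum_gaussTerm_two_pow, unramifiedFactor_eq_one s t (by exact_mod_cast hχ2),
      if_neg (by simp), mul_one]
  by_cases hpk : p ∣ k
  · have hχp : χ p = 0 := by
      have hJ : jacobiSym k p = 0 := by
        rw [jacobiSym.eq_zero_iff, Int.gcd_natCast_natCast, Nat.gcd_eq_right hpk]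
        exact ⟨hp.ne_zero, hp.ne_one⟩
      rw [hχ p (hp.odd_of_ne_two hp2), hJ, Int.cast_zero, zero_mul]
    rw [tsum_gaussTerm_prime_pow_eq_ramifiedFactor ψ s t hk hp hp2,
      unramifiedFactor_eq_one s t hχp, one_mul, if_pos (by simp [hp, hpk, hk, hp2])]
  · rw [tsum_gaussTerm_prime_pow_eq_unramifiedFactor s t hk hχ hp hp2 hpk,
      if_neg (by simp [hpk]), mul_one]

variable {s t}

theorem summable_norm_gaussTerm (hk : k ≠ 0)
    (hχ : ∀ m : ℕ, Odd m → χ m = (jacobiSym k m : ℤ) * ψ m) (hs : 1 < s.re) (ht : 0 < t.re) :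
    Summable fun n ↦ ‖gaussTerm ψ k s t n‖ := by
  refine summable_norm_of_summable_tsum_primePow (gaussTerm_zero ψ k s t) (gaussTerm_one ψ k s t)
    (gaussTerm_mul ψ k s t) (summable_norm_gaussTerm_prime_pow ψ s t hk) ?_
  refine Summable.of_norm_bounded_eventually
    ((Nat.Primes.summable_rpow.mpr (neg_lt_neg hs)).mul_right (1 - (2 : ℝ) ^ (-t.re))⁻¹) ?_
  have hfinite : {p : Nat.Primes | (p : ℕ) ∈ (2 * k).primeFactors}.Finite :=
    (2 * k).primeFactors.finite_toSet.preimage Subtype.val_injective.injOn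
  filter_upwards [hfinite.compl_mem_cofinite] with p hp
  have hp2k : ¬ (p : ℕ) ∣ 2 * k := fun h ↦
    hp (Nat.mem_primeFactors.mpr ⟨p.prop, h, mul_ne_zero two_ne_zero hk⟩)
  have hp2 : (p : ℕ) ≠ 2 := fun h ↦ hp2k (h ▸ dvd_mul_right 2 k)
  have hpk : ¬ (p : ℕ) ∣ k := fun h ↦ hp2k (h.mul_left 2)
  rw [tsum_eq_single 0 fun e he ↦ by
      rw [gaussTerm_prime_pow_eq_zero ψ s t p.prop hpk he, norm_zero],
    zero_add, pow_one, norm_norm, gaussTerm_prime s t hχ p.prop hp2 hpk]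
  exact norm_dirichlet_mul_cpow_neg_mul_inv_le χ s ht p.prop.two_le

lemma hasProd_primes_ite_mem {α : Type*} [CommMonoid α] [TopologicalSpace α] {S : Finset ℕ}
    (hS : ∀ p ∈ S, p.Prime) (f : ℕ → α) :
    HasProd (fun p : Nat.Primes ↦ if (p : ℕ) ∈ S then f p else 1) (∏ p ∈ S, f p) := by
  rw [← Finset.prod_congr rfl fun p (hp : p ∈ S) ↦ if_pos hp,
    ← Finset.prod_subtype_of_mem (fun p ↦ if p ∈ S then f p else 1) hS]
  exact hasProd_prod_of_ne_finset_one fun p hp ↦ if_neg fun h ↦ hp (Finset.mem_subtype.mpr h)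

theorem tsum_gaussTerm (hk : k ≠ 0) (hχ : ∀ m : ℕ, Odd m → χ m = (jacobiSym k m : ℤ) * ψ m)
    (hχ2 : χ 2 = 0) (hs : 1 < s.re) (ht : 0 < t.re) :
    ∑' n, gaussTerm ψ k s t n =
      (∏' p : Nat.Primes, unramifiedFactor χ s t p) * Pkt s t k fun m ↦ ψ m := by
  have heuler := EulerProduct.eulerProduct_hasProd (gaussTerm_one ψ k s t)
    (gaussTerm_mul ψ k s t) (summable_norm_gaussTerm hk hχ hs ht) (gaussTerm_zero ψ k s t)
  simp only [fun p : Nat.Primes ↦ tsum_gaussTerm_prime_pow s t hk hχ hχ2 p.prop] at heuler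
  have hprime (p : ℕ) (hp : p ∈ k.primeFactors.filter (· ≠ 2)) : p.Prime :=
    Nat.prime_of_mem_primeFactors (Finset.mem_of_mem_filter p hp)
  exact heuler.unique ((multipliable_unramifiedFactor χ hs ht).hasProd.mul
    (hasProd_primes_ite_mem hprime (ramifiedFactor ψ k s t)))

end GaussSeries

theorem statement17_general {q : ℕ} (ψ : DirichletCharacter ℂ q) {k : ℕ} (hk : k ≠ 0) {N : ℕ}
    (hN : 1 ≤ N) {s t : ℂ} (hs : 1 < s.re) (ht : 0 < t.re) {M : ℕ} [NeZero M]
    (χ : DirichletCharacter ℂ M) (hχ : ∀ m : ℕ, Odd m → χ m = (jacobiSym k m : ℤ) * ψ m)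
    (hχ2 : χ 2 = 0) :
    Summable (fun n : ℕ ↦
      ‖if Odd n then jacobiG n k * ψ n * aF t n * (n : ℂ) ^ (-(s + 1 / 2)) else 0‖) ∧
    (∑' n : ℕ, if Odd n then jacobiG n k * ψ n * aF t n * (n : ℂ) ^ (-(s + 1 / 2)) else 0) =
      (∏ j ∈ Finset.range (N + 1),
        χ.LFunction (s + j * t) / (χ ^ 2).LFunction (2 * s + 2 * j * t)) *
      Erec (fun m ↦ χ m) s t N * Pkt s t k fun m ↦ ψ m := by
  refine ⟨summable_norm_gaussTerm hk hχ hs ht, ?_⟩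
  rw [prod_LFunction_div_mul_Erec χ hs ht hN]
  exact tsum_gaussTerm hk hχ hχ2 hs ht

/-- Euler-product factorization of `Σ_{n odd} G((·/n),k) ψ(n) a_t(n) n^{-(s+1/2)}`.
Here `ψ` is a character mod `q ∈ {4,8}` and `χ` is the character mod `8kq` given on odd `m` by
`(k|m)·ψ(m)` (the character `(4k/·)ψ`). -/
theorem statement17
    (q : ℕ) (hq : q = 4 ∨ q = 8) (ψ : DirichletCharacter ℂ q)
    (k : ℕ) (hk : 1 ≤ k) (N : ℕ) (hN : 1 ≤ N)
    (s t : ℂ) (hs : 1 < s.re) (ht : 0 < t.re)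
    (χ : DirichletCharacter ℂ (8 * k * q))
    (hχ : (∀ m : ℕ, Odd m →
        χ (m : ZMod (8 * k * q)) = ((jacobiSym (k : ℤ) m : ℤ) : ℂ) * ψ (m : ZMod q)) ∧
      (∀ m : ℕ, Even m → χ (m : ZMod (8 * k * q)) = 0)) :
    haveI : NeZero (8 * k * q) := ⟨by rcases hq with rfl | rfl <;> omega⟩
    Summable (fun n : ℕ => ‖(if Odd n then
        jacobiG n k * ψ (n : ZMod q) * aF t n * (n : ℂ) ^ (-(s + 1 / 2)) else 0)‖) ∧
    (∑' n : ℕ, if Odd n then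
        jacobiG n k * ψ (n : ZMod q) * aF t n * (n : ℂ) ^ (-(s + 1 / 2)) else 0) =
      (∏ j ∈ Finset.range (N + 1),
        χ.LFunction (s + (j : ℂ) * t) / (χ ^ 2).LFunction (2 * s + 2 * (j : ℂ) * t)) *
      Erec (fun m => χ (m : ZMod (8 * k * q))) s t N *
      Pkt s t k (fun m => ψ (m : ZMod q)) := by
  have : NeZero (8 * k * q) := ⟨by rcases hq with rfl | rfl <;> omega⟩
  exact statement17_general ψ (Nat.one_le_iff_ne_zero.mp hk) hN hs ht χ hχ.1
    (mod_cast hχ.2 2 even_two)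
end
end

section
/- Let ψ be a Dirichlet character modulo 4 or 8 (so that ψ(2) = 0), and let δ > 0 and ε > 0. Then there is a constant C > 0 such that for every integer k ≥ 1 and all s, t ∈ ℂ with Re s > 1/2 + δ and Re t > δ: |P(s,t,k;ψ)| ≤ C·k^{ε}, where P(s,t,k;ψ) := ∏_{p | k, p odd prime} (1 + a_t(p)·Σ_{j ≥ 1} G((·/p^j),k)·ψ(p^j)·p^{−j(s+1/2)}), the inner sums having only finitely many nonzero terms since G((·/p^j),k) = 0 for j ≥ v_p(k)+2. -/
open Complex

noncomputable section

/-!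
Since the prefactor of `jacobiG` is `1` or `-i`, the trivial bound on Gauss sums gives
`|G((·/n),k)| ≤ n`. Hence the `j`-th term of the series at `p` is at most `p^{-jδ} ≤ 2^{-jδ}` in
norm, and every Euler factor is bounded by a constant `A` depending only on `δ`. The product over
the primes dividing `k` is then at most `A^{ω(k)}`, and `A^{ω(k)} ≪ k^ε` because `A ≤ p^ε` for all
but finitely many primes `p`, while the product of the primes dividing `k` is at most `k`.
-/

lemma norm_jacobiSym_le_one (a : ℤ) (n : ℕ) : ‖((jacobiSym a n : ℤ) : ℂ)‖ ≤ 1 := by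
  rcases jacobiSym.trichotomy a n with h | h | h <;> simp [h]

lemma norm_jacobiTau_le (n k : ℕ) : ‖jacobiTau n k‖ ≤ n := by
  have norm_term_le (j : ℕ) : ‖((jacobiSym (j : ℤ) n : ℤ) : ℂ) *
      Complex.exp (2 * Real.pi * Complex.I * j * k / n)‖ ≤ 1 := by
    have exponent_eq : (2 * Real.pi * I * j * k / n : ℂ) = (2 * Real.pi * j * k / n : ℝ) * I := by
      push_cast; ring
    rw [norm_mul, exponent_eq, norm_exp_ofReal_mul_I, mul_one]
    exact norm_jacobiSym_le_one j n
  simpa [jacobiTau] using norm_sum_le_of_le (Finset.range n) fun j _ => norm_term_le j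

lemma norm_jacobiG (n k : ℕ) : ‖jacobiG n k‖ = ‖jacobiTau n k‖ := by
  have norm_prefactor :
      ‖(1 - I) / 2 + ((jacobiSym (-1 : ℤ) n : ℤ) : ℂ) * (1 + I) / 2‖ = 1 := by
    rcases jacobiSym.eq_one_or_neg_one (a := -1) (b := n) (by simp) with h | h
    · rw [h, show (1 - I) / 2 + ((1 : ℤ) : ℂ) * (1 + I) / 2 = 1 by push_cast; ring, norm_one]
    · rw [h, show (1 - I) / 2 + ((-1 : ℤ) : ℂ) * (1 + I) / 2 = -I by push_cast; ring, norm_neg,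
        norm_I]
  rw [jacobiG, norm_mul, norm_prefactor, one_mul]

lemma norm_natCast_cpow_neg_le_two_rpow {n : ℕ} (hn : 2 ≤ n) {σ : ℝ} (hσ : 0 ≤ σ) {z : ℂ}
    (hz : σ ≤ z.re) : ‖(n : ℂ) ^ (-z)‖ ≤ (2 : ℝ) ^ (-σ) := by
  have two_le : (2 : ℝ) ≤ n := mod_cast hn
  calc ‖(n : ℂ) ^ (-z)‖ = (n : ℝ) ^ (-z.re) := by
        rw [norm_natCast_cpow_of_pos (by lia), neg_re]
    _ ≤ (n : ℝ) ^ (-σ) := Real.rpow_le_rpow_of_exponent_le (by linarith) (by linarith)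
    _ ≤ (2 : ℝ) ^ (-σ) := Real.rpow_le_rpow_of_nonpos two_pos two_le (by linarith)

lemma two_rpow_neg_lt_one_s18 {δ : ℝ} (hδ : 0 < δ) : (2 : ℝ) ^ (-δ) < 1 :=
  Real.rpow_lt_one_of_one_lt_of_neg one_lt_two (neg_lt_zero.2 hδ)

lemma norm_aF_prime_le {p : ℕ} (hp : p.Prime) {δ : ℝ} (hδ : 0 < δ) {t : ℂ} (ht : δ ≤ t.re) :
    ‖aF t p‖ ≤ (1 - (2 : ℝ) ^ (-δ))⁻¹ := by
  rw [aF, hp.primeFactors, Finset.prod_singleton, norm_inv]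
  refine inv_anti₀ (sub_pos.2 (two_rpow_neg_lt_one_s18 hδ)) ?_
  calc 1 - (2 : ℝ) ^ (-δ) ≤ ‖(1 : ℂ)‖ - ‖(p : ℂ) ^ (-t)‖ := by
        rw [norm_one]
        exact sub_le_sub_left (norm_natCast_cpow_neg_le_two_rpow hp.two_le hδ.le ht) 1
    _ ≤ ‖1 - (p : ℂ) ^ (-t)‖ := norm_sub_norm_le _ _

lemma norm_jacobiG_mul_cpow_le {n : ℕ} (hn : 2 ≤ n) (j k : ℕ) {δ : ℝ} (hδ : 0 ≤ δ) {s : ℂ}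
    (hs : 1 / 2 + δ ≤ s.re) :
    ‖jacobiG (n ^ j) k * (n : ℂ) ^ (-(j : ℂ) * (s + 1 / 2))‖ ≤ ((2 : ℝ) ^ (-δ)) ^ j := by
  have cpow_shift : (n : ℂ) * (n : ℂ) ^ (-(s + 1 / 2)) = (n : ℂ) ^ (-(s - 1 / 2)) := by
    have cast_ne_zero : (n : ℂ) ≠ 0 := by norm_cast; lia
    rw [show -(s - 1 / 2) = 1 + -(s + 1 / 2) by ring, cpow_add _ _ cast_ne_zero, cpow_one]
  have re_shift : δ ≤ (s - 1 / 2).re := by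
    rw [sub_re, show (1 / 2 : ℂ).re = 1 / 2 by norm_num]
    linarith
  calc ‖jacobiG (n ^ j) k * (n : ℂ) ^ (-(j : ℂ) * (s + 1 / 2))‖
      = ‖jacobiTau (n ^ j) k‖ * ‖(n : ℂ) ^ (-(s + 1 / 2))‖ ^ j := by
        rw [norm_mul, norm_jacobiG, neg_mul_comm, cpow_nat_mul, norm_pow]
    _ ≤ (n : ℝ) ^ j * ‖(n : ℂ) ^ (-(s + 1 / 2))‖ ^ j := by
        gcongr
        exact mod_cast norm_jacobiTau_le (n ^ j) k
    _ = ‖(n : ℂ) ^ (-(s - 1 / 2))‖ ^ j := by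
        rw [← cpow_shift, norm_mul, Complex.norm_natCast, mul_pow]
    _ ≤ ((2 : ℝ) ^ (-δ)) ^ j := by
        gcongr
        exact norm_natCast_cpow_neg_le_two_rpow hn hδ re_shift

/-- Upper bound for the Euler factors of `Pkt s t k f` with `‖f‖ ≤ B`, `Re s ≥ 1/2 + δ` and
`Re t ≥ δ`: one factor `(1 - 2 ^ (-δ))⁻¹` comes from `aF`, the other one is the sum of the
geometric series that dominates the series over `j`. -/
def eulerFactorBound (B δ : ℝ) : ℝ :=
  1 + (1 - (2 : ℝ) ^ (-δ))⁻¹ * (B * (1 - (2 : ℝ) ^ (-δ))⁻¹)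

lemma one_le_eulerFactorBound {B δ : ℝ} (hB : 0 ≤ B) (hδ : 0 < δ) :
    1 ≤ eulerFactorBound B δ := by
  have inv_one_sub_pos : 0 < (1 - (2 : ℝ) ^ (-δ))⁻¹ :=
    inv_pos.2 (sub_pos.2 (two_rpow_neg_lt_one_s18 hδ))
  exact le_add_of_nonneg_right (by positivity)

section EulerFactor

variable {f : ℕ → ℂ} {B δ : ℝ} {s : ℂ}

lemma norm_tsum_jacobiG_mul_cpow_le (hf : ∀ n, ‖f n‖ ≤ B) {n : ℕ} (hn : 2 ≤ n) (k : ℕ)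
    (hδ : 0 < δ) (hs : 1 / 2 + δ ≤ s.re) :
    ‖∑' j : ℕ, if 1 ≤ j then
      jacobiG (n ^ j) k * f (n ^ j) * (n : ℂ) ^ (-(j : ℂ) * (s + 1 / 2)) else 0‖ ≤
        B * (1 - (2 : ℝ) ^ (-δ))⁻¹ := by
  have B_nonneg : 0 ≤ B := (norm_nonneg _).trans (hf 0)
  have hasSum_majorant := (hasSum_geometric_of_lt_one (by positivity)
    (two_rpow_neg_lt_one_s18 hδ)).mul_left B
  refine tsum_of_norm_bounded hasSum_majorant fun j => ?_
  split_ifs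
  · rw [mul_right_comm, norm_mul, mul_comm]
    exact mul_le_mul (hf _) (norm_jacobiG_mul_cpow_le hn j k hδ.le hs) (norm_nonneg _) B_nonneg
  · rw [norm_zero]
    positivity

lemma norm_Pkt_factor_le (hf : ∀ n, ‖f n‖ ≤ B) {p : ℕ} (hp : p.Prime) (k : ℕ)
    (hδ : 0 < δ) (hs : 1 / 2 + δ ≤ s.re) {t : ℂ} (ht : δ ≤ t.re) :
    ‖1 + aF t p * ∑' j : ℕ, if 1 ≤ j then
      jacobiG (p ^ j) k * f (p ^ j) * (p : ℂ) ^ (-(j : ℂ) * (s + 1 / 2)) else 0‖ ≤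
        eulerFactorBound B δ := by
  refine norm_add_le_of_le norm_one.le (norm_mul_le_of_le ?_ ?_)
  · exact norm_aF_prime_le hp hδ ht
  · exact norm_tsum_jacobiG_mul_cpow_le hf hp.two_le k hδ hs

lemma norm_Pkt_le_pow_card_primeFactors (hf : ∀ n, ‖f n‖ ≤ B) (k : ℕ)
    (hδ : 0 < δ) (hs : 1 / 2 + δ ≤ s.re) {t : ℂ} (ht : δ ≤ t.re) :
    ‖Pkt s t k f‖ ≤ eulerFactorBound B δ ^ k.primeFactors.card := by
  have B_nonneg : 0 ≤ B := (norm_nonneg _).trans (hf 0)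
  rw [Pkt, norm_prod]
  refine (Finset.prod_le_prod (fun _ _ => norm_nonneg _) fun p hp => norm_Pkt_factor_le hf
    (Nat.prime_of_mem_primeFactors (Finset.mem_filter.1 hp).1) k hδ hs ht).trans ?_
  rw [Finset.prod_const]
  exact pow_le_pow_right₀ (one_le_eulerFactorBound B_nonneg hδ) (Finset.card_filter_le _ _)

end EulerFactor

lemma exists_nat_forall_le_natCast_rpow (A : ℝ) {ε : ℝ} (hε : 0 < ε) :
    ∃ N : ℕ, ∀ n : ℕ, N ≤ n → A ≤ (n : ℝ) ^ ε :=
  Filter.eventually_atTop.1 <|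
    ((tendsto_rpow_atTop hε).comp tendsto_natCast_atTop_atTop).eventually_ge_atTop A

lemma prod_natCast_rpow_le_of_subset_primeFactors {k : ℕ} (hk : k ≠ 0) {S : Finset ℕ}
    (hS : S ⊆ k.primeFactors) {ε : ℝ} (hε : 0 ≤ ε) :
    ∏ p ∈ S, (p : ℝ) ^ ε ≤ (k : ℝ) ^ ε := by
  have prod_dvd : ∏ p ∈ S, p ∣ k :=
    (Finset.prod_dvd_prod_of_subset _ _ _ hS).trans (Nat.prod_primeFactors_dvd k)
  have prod_le : ∏ p ∈ S, (p : ℝ) ≤ k := by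
    rw [← Nat.cast_prod]
    exact Nat.cast_le.2 (Nat.le_of_dvd (Nat.pos_of_ne_zero hk) prod_dvd)
  rw [Real.finsetProd_rpow _ _ fun _ _ => Nat.cast_nonneg _]
  exact Real.rpow_le_rpow (by positivity) prod_le hε

lemma exists_pow_card_primeFactors_le_mul_rpow {A ε : ℝ} (hA : 1 ≤ A) (hε : 0 < ε) :
    ∃ C : ℝ, 0 < C ∧ ∀ k : ℕ, k ≠ 0 → A ^ k.primeFactors.card ≤ C * (k : ℝ) ^ ε := by
  obtain ⟨N, le_rpow⟩ := exists_nat_forall_le_natCast_rpow A hε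
  refine ⟨A ^ N, by positivity, fun k hk => ?_⟩
  have card_small_le : (k.primeFactors.filter (· < N)).card ≤ N := by
    simpa using Finset.card_le_card (t := Finset.range N) fun p hp =>
      Finset.mem_range.2 (Finset.mem_filter.1 hp).2
  have prod_large_le : ∏ p ∈ k.primeFactors with ¬ p < N, A ≤ (k : ℝ) ^ ε :=
    (Finset.prod_le_prod (fun _ _ => by positivity) fun p hp =>
      le_rpow p (not_lt.1 (Finset.mem_filter.1 hp).2)).trans
      (prod_natCast_rpow_le_of_subset_primeFactors hk (Finset.filter_subset _ _) hε.le)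
  rw [← Finset.prod_const, ← Finset.prod_filter_mul_prod_filter_not k.primeFactors (· < N)]
  refine mul_le_mul ?_ prod_large_le (by positivity) (by positivity)
  rw [Finset.prod_const]
  exact pow_le_pow_right₀ hA card_small_le

theorem statement18_general (B : ℝ) {δ ε : ℝ} (hδ : 0 < δ) (hε : 0 < ε) :
    ∃ C : ℝ, 0 < C ∧ ∀ f : ℕ → ℂ, (∀ n, ‖f n‖ ≤ B) → ∀ k : ℕ, k ≠ 0 →
      ∀ s t : ℂ, 1 / 2 + δ ≤ s.re → δ ≤ t.re → ‖Pkt s t k f‖ ≤ C * (k : ℝ) ^ ε := by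
  obtain ⟨C, C_pos, pow_card_le⟩ := exists_pow_card_primeFactors_le_mul_rpow
    (one_le_eulerFactorBound (abs_nonneg B) hδ) hε
  refine ⟨C, C_pos, fun f hf k hk s t hs ht => ?_⟩
  have hf_abs (n : ℕ) : ‖f n‖ ≤ |B| := (hf n).trans (le_abs_self B)
  exact (norm_Pkt_le_pow_card_primeFactors hf_abs k hδ hs ht).trans (pow_card_le k hk)

/-- the bound `|P(s,t,k;ψ)| ≤ C k^ε` for `Re s > 1/2 + δ`, `Re t > δ`,
uniformly in `k`, where `ψ` is a Dirichlet character mod `4` or mod `8`. -/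
theorem statement18
    (q : ℕ) (hq : q = 4 ∨ q = 8) (ψ : DirichletCharacter ℂ q)
    (δ ε : ℝ) (hδ : 0 < δ) (hε : 0 < ε) :
    ∃ C : ℝ, 0 < C ∧ ∀ k : ℕ, 1 ≤ k → ∀ s t : ℂ, 1 / 2 + δ < s.re → δ < t.re →
      ‖Pkt s t k (fun m => ψ (m : ZMod q))‖ ≤ C * (k : ℝ) ^ ε := by
  obtain ⟨C, C_pos, norm_le⟩ := statement18_general 1 hδ hε
  exact ⟨C, C_pos, fun k hk s t hs ht =>
    norm_le _ (fun _ => ψ.norm_le_one _) k (by lia) s t hs.le ht.le⟩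
end
end

section
/- Let k be an odd positive integer and let s ∈ ℂ with 1/2 < Re s < 1. Then ∏_{p | k} ( 1 + (1 − p^{s−1})^{−1} · Σ_{j ≥ 1} G((·/p^j), k²) · p^{−j(s+1/2)} ) = ∏_{p | k} ( 1 + (p−1)/((p^s−p)·(1−p^{2s−1})) + p^{−α_p(s−1/2)} · ( 1/(p^s·(1−p^{s−1})) + (p−1)/((p−p^s)·(1−p^{2s−1})) ) ), where for each prime p | k, α_p := 2·v_p(k), and each inner sum over j has only finitely many nonzero terms since G((·/p^j),k²) = 0 for j ≥ α_p + 2. -/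
open Complex

noncomputable section

/-!
The theta function near rational points yields Landsberg–Schaar reciprocity, hence the quadratic
Gauss sum modulo an odd prime `p` with its sign, and the factor in front of `τ` in `G` is exactly
the one that turns this Gauss sum into `√p`. With `v = v_p(k)` this makes `G((·/p^j), k²)` equal to
`φ(p^j)` for even `0 < j ≤ 2v`, to `p^(2v) √p` for `j = 2v + 1`, and to `0` for all other `j > 0`,
so the series over `j` is a finite geometric sum plus one term.
-/

section LandsbergSchaar

open Filter Topology

/-- The generalised quadratic Gauss sum `∑_{r mod b} e^{πi a r² / b}`. The summand depends only on
`r` modulo `b` when `a * b` is even. -/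
def quadraticExpSum (a : ℤ) (b : ℕ) : ℂ :=
  ∑ r ∈ Finset.range b, cexp (Real.pi * I * a * r ^ 2 / b)

lemma ofReal_mul_cpow_s19 {x : ℝ} (hx : 0 < x) {y : ℂ} (hy : y ≠ 0) (r : ℂ) :
    ((x : ℂ) * y) ^ r = (x : ℂ) ^ r * y ^ r := by
  have hx' : (x : ℂ) ≠ 0 := ofReal_ne_zero.mpr hx.ne'
  rw [cpow_def_of_ne_zero (mul_ne_zero hx' hy), cpow_def_of_ne_zero hx', cpow_def_of_ne_zero hy,
    log_ofReal_mul hx hy, ofReal_log hx.le, add_mul, Complex.exp_add]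

lemma tendsto_jacobiTheta₂_term_of_tendsto_im {ι : Type*} {l : Filter ι} {n : ℤ} (hn : n ≠ 0)
    (z : ℂ) {τ : ι → ℂ} (hτ : Tendsto (fun i ↦ (τ i).im) l atTop) :
    Tendsto (fun i ↦ jacobiTheta₂_term n z (τ i)) l (𝓝 0) := by
  rw [tendsto_zero_iff_norm_tendsto_zero]
  simp only [norm_jacobiTheta₂_term]
  have hneg : -Real.pi * (n : ℝ) ^ 2 < 0 := by
    have : (0 : ℝ) < (n : ℝ) ^ 2 := by positivity
    nlinarith [Real.pi_pos]
  exact Real.tendsto_exp_atBot.comp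
    (tendsto_atBot_add_const_right _ _ (hτ.const_mul_atTop_of_neg hneg))

lemma tendsto_jacobiTheta₂_of_tendsto_im {ι : Type*} {l : Filter ι} (z : ℂ) {τ : ι → ℂ}
    (hτ : Tendsto (fun i ↦ (τ i).im) l atTop) :
    Tendsto (fun i ↦ jacobiTheta₂ z (τ i)) l (𝓝 1) := by
  have hsummable : Summable fun n : ℤ ↦ ‖jacobiTheta₂_term n z I‖ :=
    ((summable_jacobiTheta₂_term_iff z I).mpr (by simp)).norm
  have hterm (n : ℤ) : Tendsto (fun i ↦ jacobiTheta₂_term n z (τ i)) l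
      (𝓝 (if n = 0 then 1 else 0)) := by
    split_ifs with hn
    · simpa [hn, jacobiTheta₂_term] using tendsto_const_nhds
    · exact tendsto_jacobiTheta₂_term_of_tendsto_im hn z hτ
  have hbound : ∀ᶠ i in l, ∀ n : ℤ, ‖jacobiTheta₂_term n z (τ i)‖ ≤ ‖jacobiTheta₂_term n z I‖ := by
    filter_upwards [hτ.eventually_ge_atTop 1] with i hi n
    simp only [norm_jacobiTheta₂_term, I_im]
    have : 0 ≤ Real.pi * (n : ℝ) ^ 2 := by positivity
    exact Real.exp_le_exp.mpr (by nlinarith)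
  simpa [jacobiTheta₂] using tendsto_tsum_of_dominated_convergence hsummable hterm hbound

lemma tsum_int_eq_sum_tsum_residue {E : Type*} [NormedAddCommGroup E] [CompleteSpace E]
    {f : ℤ → E} (hf : Summable f) (b : ℕ) [NeZero b] :
    ∑' n, f n = ∑ r ∈ Finset.range b, ∑' m : ℤ, f (r + m * b) := by
  let e : ℤ ≃ Fin b × ℤ := (Int.divModEquiv b).trans (Equiv.prodComm ℤ (Fin b))
  have hfe : Summable fun x ↦ f (e.symm x) := hf.comp_injective e.symm.injective
  rw [← e.symm.tsum_eq, hfe.tsum_prod, tsum_fintype, Finset.sum_range]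
  simp [e, Int.divModEquiv, add_comm]

lemma exp_quadratic_add_mul {a : ℤ} {b : ℕ} [NeZero b] (hab : Even (a * b)) (r m : ℤ) :
    cexp (Real.pi * I * a * (r + m * b) ^ 2 / b) = cexp (Real.pi * I * a * r ^ 2 / b) := by
  obtain ⟨c, hc⟩ := hab
  have hb : (b : ℂ) ≠ 0 := NeZero.ne _
  have hc' : (a : ℂ) * b = c + c := mod_cast hc
  refine Complex.exp_eq_exp_iff_exists_int.mpr ⟨a * r * m + c * m ^ 2, ?_⟩
  push_cast
  field_simp
  linear_combination (m : ℂ) ^ 2 * b * hc'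

lemma jacobiTheta₂_term_residue {a : ℤ} {b : ℕ} [NeZero b] (hab : Even (a * b)) (w : ℂ)
    (r m : ℤ) :
    jacobiTheta₂_term (r + m * b) 0 (a / b + w / b ^ 2) =
      cexp (Real.pi * I * a * r ^ 2 / b) * cexp (Real.pi * I * (r / b) ^ 2 * w) *
        jacobiTheta₂_term m (r / b * w) w := by
  have hb : (b : ℂ) ≠ 0 := NeZero.ne _
  rw [← exp_quadratic_add_mul hab r m, jacobiTheta₂_term, jacobiTheta₂_term, ← Complex.exp_add,
    ← Complex.exp_add]
  push_cast
  congr 1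
  field_simp
  ring

/-- The modular transformation is applied to each residue class modulo `b` separately. -/
lemma jacobiTheta₂_rat_add {a : ℤ} {b : ℕ} [NeZero b] (hab : Even (a * b)) {w : ℂ}
    (hw : 0 < w.im) :
    jacobiTheta₂ 0 (a / b + w / b ^ 2) = 1 / (-I * w) ^ (1 / 2 : ℂ) *
      ∑ r ∈ Finset.range b, cexp (Real.pi * I * a * r ^ 2 / b) *
        jacobiTheta₂ (r / b) (-1 / w) := by
  have hw0 : w ≠ 0 := by rintro rfl; simp at hw
  have him : 0 < (a / b + w / b ^ 2 : ℂ).im := by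
    have hcast : (a / b + w / b ^ 2 : ℂ) = ((a / b : ℝ) : ℂ) + w / ((b ^ 2 : ℝ) : ℂ) := by
      push_cast; rfl
    rw [hcast, add_im, ofReal_im, zero_add, div_ofReal_im]
    have : (0 : ℝ) < b := mod_cast NeZero.pos b
    positivity
  rw [jacobiTheta₂, tsum_int_eq_sum_tsum_residue ((summable_jacobiTheta₂_term_iff 0 _).mpr him) b,
    Finset.mul_sum]
  refine Finset.sum_congr rfl fun r _ ↦ ?_
  have hexp : cexp (Real.pi * I * (r / b) ^ 2 * w) *
      cexp (-Real.pi * I * (r / b * w) ^ 2 / w) = 1 := by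
    rw [← Complex.exp_add, ← Complex.exp_zero]
    congr 1
    field_simp
    ring
  calc ∑' m : ℤ, jacobiTheta₂_term (r + m * b) 0 (a / b + w / b ^ 2)
    _ = cexp (Real.pi * I * a * r ^ 2 / b) * cexp (Real.pi * I * (r / b) ^ 2 * w) *
        jacobiTheta₂ (r / b * w) w := by
      rw [jacobiTheta₂, ← tsum_mul_left]
      exact tsum_congr fun m ↦ by simpa using jacobiTheta₂_term_residue hab w r m
    _ = _ := by
      rw [jacobiTheta₂_functional_equation, mul_div_cancel_right₀ _ hw0]
      linear_combination cexp (Real.pi * I * a * r ^ 2 / b) * (1 / (-I * w) ^ (1 / 2 : ℂ)) *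
        jacobiTheta₂ (r / b) (-1 / w) * hexp

lemma tendsto_cpow_mul_jacobiTheta₂_rat_add {a : ℤ} {b : ℕ} [NeZero b] (hab : Even (a * b))
    {ι : Type*} {l : Filter ι} {w : ι → ℂ} (hw : Tendsto (fun i ↦ (-1 / w i).im) l atTop) :
    Tendsto (fun i ↦ (-I * w i) ^ (1 / 2 : ℂ) * jacobiTheta₂ 0 (a / b + w i / b ^ 2)) l
      (𝓝 (quadraticExpSum a b)) := by
  have hlim : Tendsto (fun i ↦ ∑ r ∈ Finset.range b, cexp (Real.pi * I * a * r ^ 2 / b) *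
      jacobiTheta₂ (r / b) (-1 / w i)) l (𝓝 (quadraticExpSum a b)) := by
    refine tendsto_finsetSum _ fun r _ ↦ ?_
    simpa using (tendsto_jacobiTheta₂_of_tendsto_im (r / b) hw).const_mul
      (cexp (Real.pi * I * a * r ^ 2 / b))
  refine hlim.congr' ?_
  filter_upwards [hw.eventually_gt_atTop 0] with i hi
  have hw0 : w i ≠ 0 := by rintro h; simp [h] at hi
  have him : 0 < (w i).im := by
    have hinv : (-1 / w i).im = (w i).im / normSq (w i) := by
      rw [neg_div, one_div, neg_im, inv_im, neg_div, neg_neg]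
    exact (div_pos_iff_of_pos_right (normSq_pos.mpr hw0)).mp (hinv ▸ hi)
  have hroot : (-I * w i) ^ (1 / 2 : ℂ) ≠ 0 := by simp [cpow_eq_zero_iff, hw0]
  rw [jacobiTheta₂_rat_add hab him, ← mul_assoc, mul_one_div_cancel hroot, one_mul]

lemma one_add_I_mul_ofReal_ne_zero (x : ℝ) : 1 + I * x ≠ 0 := fun h ↦ by
  simpa using congrArg re h

lemma neg_one_div_add_div_sq {a b w : ℂ} (ha : a ≠ 0) (hb : b ≠ 0) (hw : 1 + w / (a * b) ≠ 0) :
    -1 / (a / b + w / b ^ 2) = -b / a + w / (1 + w / (a * b)) / a ^ 2 := by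
  have hden : a * b + w ≠ 0 := by
    have : a * b + w = a * b * (1 + w / (a * b)) := by field_simp
    exact this ▸ mul_ne_zero (mul_ne_zero ha hb) hw
  have hτ : a / b + w / b ^ 2 = (a * b + w) / b ^ 2 := by field_simp
  have hone : 1 + w / (a * b) = (a * b + w) / (a * b) := by field_simp
  rw [hτ, hone]
  field_simp
  ring

lemma im_neg_one_div_I_mul_div (x t : ℝ) : (-1 / (I * t / (1 + I * t / x))).im = t⁻¹ := by
  rcases eq_or_ne t 0 with rfl | ht
  · simp
  have ht' : (t : ℂ) ≠ 0 := ofReal_ne_zero.mpr ht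
  have hsplit : -1 / (I * t / (1 + I * t / x)) = ((t⁻¹ : ℝ) : ℂ) * I - ((x⁻¹ : ℝ) : ℂ) := by
    rw [div_div_eq_mul_div, div_eq_iff (mul_ne_zero I_ne_zero ht')]
    push_cast
    linear_combination (-I ^ 2) * inv_mul_cancel₀ ht' - I_sq
  rw [hsplit, sub_im, ofReal_im, sub_zero, mul_I_im, ofReal_re]

lemma cpow_mul_jacobiTheta₂_rat_add_eq {a b : ℕ} [NeZero a] [NeZero b] {t : ℝ} (ht : 0 < t) :
    ((1 + I * t / (a * b))⁻¹ : ℂ) ^ (1 / 2 : ℂ) * (-I * (a / b + I * t / b ^ 2)) ^ (1 / 2 : ℂ) *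
        ((-I * (I * t)) ^ (1 / 2 : ℂ) * jacobiTheta₂ 0 (a / b + I * t / b ^ 2)) =
      (-I * (I * t / (1 + I * t / (a * b)))) ^ (1 / 2 : ℂ) *
        jacobiTheta₂ 0 (-b / a + I * t / (1 + I * t / (a * b)) / a ^ 2) := by
  have ha : (a : ℂ) ≠ 0 := NeZero.ne _
  have hb : (b : ℂ) ≠ 0 := NeZero.ne _
  have hd : (1 + I * t / (a * b) : ℂ) ≠ 0 := by
    simpa [mul_div_assoc] using one_add_I_mul_ofReal_ne_zero (t / (a * b))
  have hτ : (a / b + I * t / b ^ 2 : ℂ) ≠ 0 := fun h ↦ hd <| by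
    have hone : 1 + I * t / (a * b) = b / a * (a / b + I * t / b ^ 2 : ℂ) := by field_simp
    rw [hone, h, mul_zero]
  have hroot : (-I * (a / b + I * t / b ^ 2)) ^ (1 / 2 : ℂ) ≠ 0 := by
    simp [cpow_eq_zero_iff, hτ]
  have hleft : -I * (I * t) = t := by linear_combination -t * I_sq
  have hright : -I * (I * t / (1 + I * t / (a * b))) = t * (1 + I * t / (a * b))⁻¹ := by
    rw [div_eq_mul_inv, ← mul_assoc, hleft]
  rw [hleft, hright, ofReal_mul_cpow_s19 ht (inv_ne_zero hd), jacobiTheta₂_functional_equation,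
    neg_one_div_add_div_sq ha hb hd, zero_div, zero_pow two_ne_zero, mul_zero, zero_div,
    Complex.exp_zero]
  linear_combination ((1 + I * t / (a * b))⁻¹ : ℂ) ^ (1 / 2 : ℂ) * (t : ℂ) ^ (1 / 2 : ℂ) *
    jacobiTheta₂ 0 (-b / a + I * t / (1 + I * t / (a * b)) / a ^ 2) * mul_one_div_cancel hroot

/-- Both sides are limits of a multiple of `θ(τ)` as `τ` tends vertically to `a / b`: the left-hand
side directly, the right-hand side after `τ ↦ -1 / τ`, which takes `τ` towards `-b / a`. -/
theorem landsberg_schaar_s19 {a b : ℕ} [NeZero a] [NeZero b] (hab : Even (a * b)) :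
    (-I * (a / b)) ^ (1 / 2 : ℂ) * quadraticExpSum a b = quadraticExpSum (-b) a := by
  have ha : (0 : ℝ) < a := mod_cast NeZero.pos a
  have hb : (0 : ℝ) < b := mod_cast NeZero.pos b
  have hd (t : ℝ) : (1 + I * t / (a * b) : ℂ) ≠ 0 := by
    simpa [mul_div_assoc] using one_add_I_mul_ofReal_ne_zero (t / (a * b))
  have hratio : Tendsto (fun t : ℝ ↦ (1 + I * t / (a * b) : ℂ)⁻¹) (𝓝[>] 0) (𝓝 1) := by
    have : ContinuousAt (fun t : ℝ ↦ (1 + I * t / (a * b) : ℂ)⁻¹) 0 :=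
      ContinuousAt.inv₀ (by fun_prop) (hd 0)
    simpa using this.tendsto.mono_left nhdsWithin_le_nhds
  have hτ : Tendsto (fun t : ℝ ↦ (-I * (a / b + I * t / b ^ 2) : ℂ)) (𝓝[>] 0)
      (𝓝 (-I * (a / b))) := by
    have : ContinuousAt (fun t : ℝ ↦ (-I * (a / b + I * t / b ^ 2) : ℂ)) 0 := by fun_prop
    simpa using this.tendsto.mono_left nhdsWithin_le_nhds
  have hslit : (-I * (a / b) : ℂ) ∈ slitPlane := by
    have hcast : (-I * (a / b) : ℂ) = ((a / b : ℝ) : ℂ) * -I := by push_cast; ring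
    simp [hcast, mem_slitPlane_iff, -ofReal_div, ha.ne', hb.ne']
  have hleft := tendsto_cpow_mul_jacobiTheta₂_rat_add (a := a) (b := b) (mod_cast hab)
    (w := fun t : ℝ ↦ I * t) (l := 𝓝[>] 0)
    (by simpa using tendsto_inv_nhdsGT_zero.congr fun t ↦ (im_neg_one_div_I_mul_div 0 t).symm)
  have hright := tendsto_cpow_mul_jacobiTheta₂_rat_add (a := -b) (b := a)
    (by simpa [mul_comm] using mod_cast hab)
    (w := fun t : ℝ ↦ I * t / (1 + I * t / (a * b))) (l := 𝓝[>] 0)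
    (by simpa using
      tendsto_inv_nhdsGT_zero.congr fun t ↦ (im_neg_one_div_I_mul_div (a * b) t).symm)
  have hlim := ((hratio.cpow (tendsto_const_nhds (x := (1 / 2 : ℂ))) (by simp)).mul
    (hτ.cpow (tendsto_const_nhds (x := (1 / 2 : ℂ))) hslit)).mul hleft
  rw [one_cpow, one_mul] at hlim
  refine tendsto_nhds_unique hlim (hright.congr' ?_)
  filter_upwards [self_mem_nhdsWithin] with t ht
  simpa using (cpow_mul_jacobiTheta₂_rat_add_eq ht).symm


section GaussSum

lemma cpow_half_neg_I_mul_two_div (n : ℕ) [NeZero n] :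
    (-I * (2 / n)) ^ (1 / 2 : ℂ) = (1 - I) / (√n : ℝ) := by
  have hn : (0 : ℝ) < √n := Real.sqrt_pos.mpr (mod_cast NeZero.pos n)
  have hre : 0 < ((1 - I) / (√n : ℝ)).re := by simpa [div_ofReal_re] using hn
  have hsq : -I * (2 / n) = ((1 - I) / (√n : ℝ)) ^ 2 := by
    have hn' : ((√n : ℝ) : ℂ) ^ 2 = n := mod_cast Real.sq_sqrt n.cast_nonneg
    rw [div_pow, hn']
    linear_combination -(n : ℂ)⁻¹ * I_sq
  rw [hsq, one_div, sq_cpow_two_inv hre]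

theorem quadraticExpSum_two (n : ℕ) [NeZero n] :
    quadraticExpSum 2 n = (1 + I) / 2 * (1 + (-I) ^ n) * (√n : ℝ) := by
  have hn : ((√n : ℝ) : ℂ) ≠ 0 :=
    ofReal_ne_zero.mpr (Real.sqrt_pos.mpr (mod_cast NeZero.pos n)).ne'
  have hdual : quadraticExpSum (-n) 2 = 1 + (-I) ^ n := by
    have hexp : cexp (Real.pi * I * (-n : ℤ) * 1 ^ 2 / 2) = (-I) ^ n := by
      rw [← exp_neg_pi_div_two_mul_I, ← exp_nat_mul]
      push_cast
      ring_nf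
    rw [quadraticExpSum, Finset.sum_range_succ, Finset.sum_range_one]
    simpa using hexp
  have hrec : (1 - I) / (√n : ℝ) * quadraticExpSum 2 n = 1 + (-I) ^ n := by
    have := landsberg_schaar_s19 (a := 2) (b := n) (even_two_mul n)
    rwa [hdual, Nat.cast_ofNat, cpow_half_neg_I_mul_two_div] at this
  rw [← hrec]
  field_simp
  linear_combination quadraticExpSum 2 n * I_sq

lemma sum_range_mul_natCast {M : Type*} [AddCommMonoid M] (n m : ℕ) [NeZero n] (f : ZMod n → M) :
    ∑ j ∈ Finset.range (n * m), f j = m • ∑ z, f z := by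
  have hone : ∑ j ∈ Finset.range n, f j = ∑ z, f z :=
    Finset.sum_nbij' (fun j ↦ (j : ZMod n)) ZMod.val (by simp) (by simp [ZMod.val_lt])
      (fun j hj ↦ ZMod.val_cast_of_lt (Finset.mem_range.mp hj)) (by simp) (by simp)
  induction m with
  | zero => simp
  | succ m ih => rw [mul_add_one, Finset.sum_range_add, ih, succ_nsmul, ← hone]; simp

lemma sum_range_natCast {M : Type*} [AddCommMonoid M] (n : ℕ) [NeZero n] (f : ZMod n → M) :
    ∑ j ∈ Finset.range n, f j = ∑ z, f z := by
  simpa using sum_range_mul_natCast n 1 f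

lemma stdAddChar_natCast (n j : ℕ) [NeZero n] :
    ZMod.stdAddChar (j : ZMod n) = cexp (2 * Real.pi * I * j / n) := by
  simpa using ZMod.stdAddChar_coe (N := n) j

lemma sum_mul_addChar_eq_zero {A R : Type*} [AddGroup A] [Fintype A] [CommRing R]
    [IsDomain R] {f : A → R} {ψ : AddChar A R} {t : A} (hf : ∀ x, f (x + t) = f x)
    (hψ : ψ t ≠ 1) : ∑ x, f x * ψ x = 0 := by
  have hshift : (∑ x, f x * ψ x) * ψ t = ∑ x, f x * ψ x :=
    calc (∑ x, f x * ψ x) * ψ t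
      _ = ∑ x, f (x + t) * ψ (x + t) := by
        simp only [Finset.sum_mul, hf, AddChar.map_add_eq_mul, mul_assoc]
      _ = ∑ x, f x * ψ x := Equiv.sum_comp (Equiv.addRight t) fun x ↦ f x * ψ x
  exact (mul_right_eq_self₀.mp hshift).resolve_left hψ

theorem gaussSum_quadraticChar_eq_sum_sq {F R : Type*} [Field F] [Fintype F] [DecidableEq F]
    [CommRing R] [IsDomain R] (hF : ringChar F ≠ 2) {ψ : AddChar F R} (hψ : ψ ≠ 1) :
    gaussSum ((quadraticChar F).ringHomComp (Int.castRingHom R)) ψ = ∑ x, ψ (x ^ 2) := by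
  have hcard (a : F) : ((Finset.univ.filter fun x : F ↦ x ^ 2 = a).card : R) =
      (quadraticChar F a : R) + 1 := by
    have := quadraticChar_card_sqrts hF a
    rw [Set.toFinset_ofPred] at this
    exact_mod_cast congrArg (Int.cast : ℤ → R) this
  calc gaussSum ((quadraticChar F).ringHomComp (Int.castRingHom R)) ψ
    _ = ∑ a, ((quadraticChar F a : R) + 1) * ψ a := by
      simp only [add_mul, one_mul, Finset.sum_add_distrib, AddChar.sum_eq_zero_of_ne_one hψ,
        add_zero]
      rfl
    _ = ∑ a, ∑ x with x ^ 2 = a, ψ (x ^ 2) := by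
      refine Finset.sum_congr rfl fun a _ ↦ ?_
      rw [← hcard, ← nsmul_eq_mul]
      exact (Finset.sum_eq_card_nsmul fun x hx ↦ by rw [(Finset.mem_filter.mp hx).2]).symm
    _ = ∑ x, ψ (x ^ 2) := Finset.sum_fiberwise _ _ _

lemma ringChar_zmod_ne_two {p : ℕ} (hp : Odd p) : ringChar (ZMod p) ≠ 2 := by
  rw [ZMod.ringChar_zmod_n]
  rintro rfl
  exact absurd hp (by decide)

variable (p : ℕ) [Fact p.Prime]

/-- The Legendre symbol modulo `p` as a complex-valued multiplicative character; the library's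
`quadraticChar` takes values in `ℤ`, whereas Gauss sums need values in `ℂ`. -/
def complexQuadraticChar : MulChar (ZMod p) ℂ :=
  (quadraticChar (ZMod p)).ringHomComp (Int.castRingHom ℂ)

lemma isQuadratic_complexQuadraticChar : (complexQuadraticChar p).IsQuadratic :=
  (quadraticChar_isQuadratic _).comp _

lemma complexQuadraticChar_natCast (a : ℕ) : complexQuadraticChar p a = jacobiSym a p := by
  rw [← jacobiSym.legendreSym.to_jacobiSym, legendreSym, complexQuadraticChar,
    MulChar.ringHomComp_apply, Int.cast_natCast, eq_intCast]

lemma gaussSum_complexQuadraticChar (hp : Odd p) :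
    gaussSum (complexQuadraticChar p) ZMod.stdAddChar =
      (1 + I) / 2 * (1 + (-I) ^ p) * (√p : ℝ) := by
  have hψ : (ZMod.stdAddChar : AddChar (ZMod p) ℂ) ≠ 1 := by
    simpa using ZMod.isPrimitive_stdAddChar p one_ne_zero
  rw [complexQuadraticChar, gaussSum_quadraticChar_eq_sum_sq (ringChar_zmod_ne_two hp) hψ,
    ← quadraticExpSum_two, ← sum_range_natCast, quadraticExpSum]
  refine Finset.sum_congr rfl fun r _ ↦ ?_
  rw [← Nat.cast_pow, stdAddChar_natCast]
  push_cast
  ring_nf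

lemma gaussSum_complexQuadraticChar_mulShift (a : ℕ) (hp : Odd p) :
    gaussSum (complexQuadraticChar p) (ZMod.stdAddChar.mulShift (a : ZMod p)) =
      jacobiSym a p * gaussSum (complexQuadraticChar p) ZMod.stdAddChar := by
  rw [← complexQuadraticChar_natCast]
  rcases eq_or_ne (a : ZMod p) 0 with ha | ha
  · have hχ : complexQuadraticChar p ≠ 1 :=
      (MulChar.ringHomComp_ne_one_iff Int.cast_injective).mpr
        (quadraticChar_ne_one (ringChar_zmod_ne_two hp))
    rw [ha, AddChar.mulShift_zero, gaussSum_one_right hχ, MulChar.map_zero, zero_mul]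
  · obtain ⟨u, hu⟩ := IsUnit.mk0 _ ha
    rw [← hu, gaussSum_mulShift_eq, (isQuadratic_complexQuadraticChar p).inv]

lemma jacobiTau_prime_pow_eq_sum (m K : ℕ) :
    jacobiTau (p ^ (m + 1)) K = ∑ j ∈ Finset.range (p ^ (m + 1)),
      (complexQuadraticChar p ^ (m + 1)) j * cexp (2 * Real.pi * I * j * K / (p ^ (m + 1) : ℕ)) :=
  Finset.sum_congr rfl fun j _ ↦ by
    rw [jacobiSym.pow_right, MulChar.pow_apply' _ m.succ_ne_zero, complexQuadraticChar_natCast,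
      Int.cast_pow]

lemma jacobiTau_prime_pow_mul (m L : ℕ) :
    jacobiTau (p ^ (m + 1)) (p ^ m * L) = p ^ m *
      gaussSum (complexQuadraticChar p ^ (m + 1)) (ZMod.stdAddChar.mulShift (L : ZMod p)) := by
  have hp : (p : ℂ) ≠ 0 := NeZero.ne _
  have hexp (j : ℕ) : cexp (2 * Real.pi * I * j * (p ^ m * L : ℕ) / (p ^ (m + 1) : ℕ)) =
      ZMod.stdAddChar.mulShift (L : ZMod p) j := by
    rw [AddChar.mulShift_apply, ← Nat.cast_mul, stdAddChar_natCast]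
    push_cast
    congr 1
    field_simp
    ring
  rw [jacobiTau_prime_pow_eq_sum]
  simp only [hexp]
  rw [pow_succ' p, sum_range_mul_natCast p (p ^ m) fun z ↦
    (complexQuadraticChar p ^ (m + 1)) z * ZMod.stdAddChar.mulShift (L : ZMod p) z, nsmul_eq_mul,
    Nat.cast_pow, gaussSum]

lemma jacobiTau_prime_pow_eq_zero_s19 {m K : ℕ} (hK : ¬ p ^ m ∣ K) :
    jacobiTau (p ^ (m + 1)) K = 0 := by
  have : NeZero (p ^ (m + 1)) := ⟨pow_ne_zero _ (NeZero.ne p)⟩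
  have hdvd : p ∣ p ^ (m + 1) := dvd_pow_self p m.succ_ne_zero
  have hψ : (ZMod.stdAddChar.mulShift (K : ZMod (p ^ (m + 1)))) (p : ZMod (p ^ (m + 1))) ≠ 1 := by
    rw [AddChar.mulShift_apply, ← AddChar.map_zero_eq_one (ZMod.stdAddChar (N := p ^ (m + 1))),
      ZMod.injective_stdAddChar.ne_iff, ← Nat.cast_mul, Ne, ZMod.natCast_eq_zero_iff, pow_succ]
    exact fun h ↦ hK (Nat.dvd_of_mul_dvd_mul_right (NeZero.pos p) h)
  rw [jacobiTau_prime_pow_eq_sum, ← sum_mul_addChar_eq_zero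
    (f := fun z ↦ (complexQuadraticChar p ^ (m + 1)) (ZMod.castHom hdvd (ZMod p) z))
    (fun z ↦ by simp) hψ, ← sum_range_natCast]
  refine Finset.sum_congr rfl fun j _ ↦ ?_
  rw [map_natCast (ZMod.castHom hdvd (ZMod p)), AddChar.mulShift_apply, ← Nat.cast_mul,
    stdAddChar_natCast]
  push_cast
  ring_nf

end GaussSum

section ModifiedGaussSum

lemma gaussSum_sign_mul {n : ℕ} (hn : Odd n) :
    ((1 - I) / 2 + (ZMod.χ₄ n : ℂ) * (1 + I) / 2) * ((1 + I) / 2 * (1 + (-I) ^ n)) = 1 := by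
  have hpow : (-I) ^ n = (-I) ^ (n % 4) :=
    pow_eq_pow_mod n (by rw [Even.neg_pow (by decide), I_pow_four])
  rcases Nat.odd_mod_four_iff.mp (Nat.odd_iff.mp hn) with h | h
  · rw [hpow, h, ZMod.χ₄_nat_one_mod_four h]
    push_cast
    linear_combination -(1 / 2) * I_sq
  · rw [hpow, h, ZMod.χ₄_nat_three_mod_four h]
    push_cast
    linear_combination ((I ^ 3 + I ^ 2 - I - 2) / 2) * I_sq

variable {p : ℕ} [Fact p.Prime]

theorem jacobiG_prime_pow_mul_of_even (hp : Odd p) {m : ℕ} (hm : Even m) (L : ℕ) :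
    jacobiG (p ^ (m + 1)) (p ^ m * L) = jacobiSym L p * p ^ m * (√p : ℝ) := by
  have hneg : jacobiSym (-1) (p ^ (m + 1)) = ZMod.χ₄ p := by
    rw [jacobiSym.pow_right, jacobiSym.at_neg_one hp, ← MulChar.pow_apply' _ (by omega),
      ZMod.isQuadratic_χ₄.pow_odd hm.add_one]
  rw [jacobiG, hneg, jacobiTau_prime_pow_mul,
    (isQuadratic_complexQuadraticChar p).pow_odd hm.add_one,
    gaussSum_complexQuadraticChar_mulShift p L hp, gaussSum_complexQuadraticChar p hp]
  linear_combination (p : ℂ) ^ m * jacobiSym L p * (√p : ℝ) * gaussSum_sign_mul hp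

theorem jacobiG_prime_pow_of_even {n K : ℕ} (hn : Even n) (hn0 : n ≠ 0) (hK : p ^ n ∣ K) :
    jacobiG (p ^ n) K = (p ^ n).totient := by
  obtain ⟨m, rfl⟩ := Nat.exists_eq_succ_of_ne_zero hn0
  obtain ⟨c, rfl⟩ := hK
  have hp : p.Prime := Fact.out
  have hneg : jacobiSym (-1) (p ^ (m + 1)) = 1 := by
    rw [jacobiSym.pow_right, ← jacobiSym.pow_left, hn.neg_one_pow, jacobiSym.one_left]
  rw [jacobiG, hneg, Nat.succ_eq_add_one, pow_succ, mul_assoc, ← pow_succ,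
    jacobiTau_prime_pow_mul, (isQuadratic_complexQuadraticChar p).pow_even hn, Nat.cast_mul,
    ZMod.natCast_self, zero_mul, AddChar.mulShift_zero, gaussSum_one_one,
    Nat.card_eq_fintype_card, ZMod.card_units_eq_totient, Nat.totient_prime_pow_succ hp,
    Nat.totient_prime hp]
  push_cast
  ring

theorem jacobiG_prime_pow_eq_zero_s19 {m K : ℕ} (hK : ¬ p ^ m ∣ K) : jacobiG (p ^ (m + 1)) K = 0 := by
  rw [jacobiG, jacobiTau_prime_pow_eq_zero_s19 p hK, mul_zero]

variable {k : ℕ}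

lemma prime_pow_dvd_sq_iff (hk : k ≠ 0) (n : ℕ) : p ^ n ∣ k ^ 2 ↔ n ≤ 2 * k.factorization p := by
  have hp : p.Prime := Fact.out
  rw [hp.pow_dvd_iff_le_factorization (pow_ne_zero 2 hk), Nat.factorization_pow,
    Finsupp.smul_apply, smul_eq_mul]

lemma jacobiG_prime_pow_even_sq (hk : k ≠ 0) {i : ℕ} (hi : i ≠ 0) :
    jacobiG (p ^ (2 * i)) (k ^ 2) =
      if i ≤ k.factorization p then ((p ^ (2 * i)).totient : ℂ) else 0 := by
  split_ifs with hle
  · exact jacobiG_prime_pow_of_even (even_two_mul i) (by positivity)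
      ((prime_pow_dvd_sq_iff hk _).mpr (by gcongr))
  · obtain ⟨m, hm⟩ : ∃ m, 2 * i = m + 1 := ⟨2 * i - 1, by omega⟩
    rw [hm, jacobiG_prime_pow_eq_zero_s19]
    rw [prime_pow_dvd_sq_iff hk]
    omega

lemma jacobiG_prime_pow_odd_sq (hp : Odd p) (hk : k ≠ 0) (i : ℕ) :
    jacobiG (p ^ (2 * i + 1)) (k ^ 2) =
      if i = k.factorization p then (p : ℂ) ^ (2 * i) * (√p : ℝ) else 0 := by
  have hpp : p.Prime := Fact.out
  by_cases hdvd : p ^ i ∣ k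
  · obtain ⟨u, rfl⟩ := hdvd
    have hu : i = (p ^ i * u).factorization p ↔ ¬ p ∣ u := by
      rw [← Nat.mul_dvd_mul_iff_left (pow_pos hpp.pos i), ← pow_succ,
        hpp.pow_dvd_iff_le_factorization hk]
      have := (hpp.pow_dvd_iff_le_factorization hk).mp (dvd_mul_right (p ^ i) u)
      omega
    rw [mul_pow, ← pow_mul', jacobiG_prime_pow_mul_of_even hp (even_two_mul i), if_congr hu rfl rfl]
    have hcop : (u : ℤ).gcd p = 1 ↔ ¬ p ∣ u := by
      rw [Int.gcd_natCast_natCast, ← hpp.coprime_iff_not_dvd, Nat.coprime_comm, Nat.Coprime]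
    rw [Nat.cast_pow u 2, jacobiSym.pow_left]
    split_ifs with hpu
    · rw [jacobiSym.eq_zero_iff_not_coprime.mpr (hcop.not.mpr (not_not.mpr hpu))]
      simp
    · rw [jacobiSym.sq_one (hcop.mpr hpu), Int.cast_one, one_mul]
  · rw [jacobiG_prime_pow_eq_zero_s19, if_neg]
    · rintro rfl
      exact hdvd (Nat.ordProj_dvd k p)
    · rwa [pow_mul', Nat.pow_dvd_pow_iff two_ne_zero]

theorem hasSum_jacobiG_prime_pow_sq (hp : Odd p) (hk : k ≠ 0) (c : ℂ) :
    HasSum (fun j ↦ if 1 ≤ j then jacobiG (p ^ j) (k ^ 2) * c ^ j else 0)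
      (∑ i ∈ Finset.Ico 1 (k.factorization p + 1), ((p ^ (2 * i)).totient : ℂ) * c ^ (2 * i) +
        p ^ (2 * k.factorization p) * (√p : ℝ) * c ^ (2 * k.factorization p + 1)) := by
  have heven (i : ℕ) : (if 1 ≤ 2 * i then jacobiG (p ^ (2 * i)) (k ^ 2) * c ^ (2 * i) else 0) =
      if i ∈ Finset.Ico 1 (k.factorization p + 1) then
        ((p ^ (2 * i)).totient : ℂ) * c ^ (2 * i) else 0 := by
    rcases eq_or_ne i 0 with rfl | hi
    · simp
    · rw [jacobiG_prime_pow_even_sq hk hi, if_pos (by omega), ite_zero_mul]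
      exact if_congr (by rw [Finset.mem_Ico]; omega) rfl rfl
  have hodd (i : ℕ) :
      (if 1 ≤ 2 * i + 1 then jacobiG (p ^ (2 * i + 1)) (k ^ 2) * c ^ (2 * i + 1) else 0) =
      if i = k.factorization p then
        p ^ (2 * k.factorization p) * (√p : ℝ) * c ^ (2 * k.factorization p + 1) else 0 := by
    rw [jacobiG_prime_pow_odd_sq hp hk, if_pos (by omega), ite_zero_mul]
    split_ifs with hi
    · rw [hi]
    · rfl
  refine HasSum.even_add_odd ?_ ?_
  · simp only [heven]
    convert hasSum_sum_of_ne_finset_zero (L := .unconditional ℕ)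
      (s := Finset.Ico 1 (k.factorization p + 1)) (fun i hi ↦ if_neg hi) using 1
    rw [Finset.sum_ite_mem, Finset.inter_self]
  · simpa only [hodd] using hasSum_ite_eq _ _

end ModifiedGaussSum

section LocalFactor

lemma cast_totient_prime_pow {K : Type*} [Field K] [CharZero K] {p n : ℕ} (hp : p.Prime)
    (hn : n ≠ 0) : ((p ^ n).totient : K) = (1 - 1 / p) * p ^ n := by
  obtain ⟨m, rfl⟩ := Nat.exists_eq_succ_of_ne_zero hn
  have hp0 : (p : K) ≠ 0 := Nat.cast_ne_zero.mpr hp.ne_zero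
  rw [Nat.succ_eq_add_one, Nat.totient_prime_pow_succ hp, pow_succ, Nat.cast_mul,
    Nat.cast_pred hp.pos, Nat.cast_pow]
  field_simp

lemma natCast_cpow_one_half (n : ℕ) : (n : ℂ) ^ (1 / 2 : ℂ) = (√n : ℝ) := by
  rw [Real.sqrt_eq_rpow, ofReal_cpow n.cast_nonneg]
  simp

lemma natCast_cpow_two_mul (n : ℕ) (s : ℂ) : (n : ℂ) ^ (2 * s) = ((n : ℂ) ^ s) ^ 2 :=
  mod_cast cpow_nat_mul (n : ℂ) 2 s

lemma natCast_cpow_neg_mul_add_half {n : ℕ} (hn : n ≠ 0) (s : ℂ) (j : ℕ) :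
    (n : ℂ) ^ (-(j : ℂ) * (s + 1 / 2)) = ((n : ℂ) ^ s * (√n : ℝ))⁻¹ ^ j := by
  rw [neg_mul_comm, cpow_nat_mul, cpow_neg, cpow_add _ _ (Nat.cast_ne_zero.mpr hn),
    natCast_cpow_one_half]

lemma natCast_cpow_neg_two_mul_sub_half {n : ℕ} (hn : n ≠ 0) (s : ℂ) (v : ℕ) :
    (n : ℂ) ^ (-((2 * v : ℕ) : ℂ) * (s - 1 / 2)) = (n / ((n : ℂ) ^ s) ^ 2) ^ v := by
  have hexp : -((2 * v : ℕ) : ℂ) * (s - 1 / 2) = v * (1 - 2 * s) := by push_cast; ring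
  rw [hexp, cpow_nat_mul, cpow_sub _ _ (Nat.cast_ne_zero.mpr hn), cpow_one, natCast_cpow_two_mul]

lemma localFactor_identity {K : Type*} [Field K] {q X : K} (hq : q ≠ 0) (hX : X ≠ 0) (hXq : X ≠ q)
    (hX2 : X ^ 2 ≠ q) (v : ℕ) :
    1 + (1 - X / q)⁻¹ * ((1 - 1 / q) * ∑ i ∈ Finset.Ico 1 (v + 1), (q / X ^ 2) ^ i +
        (q / X ^ 2) ^ v / X) =
      1 + (q - 1) / ((X - q) * (1 - X ^ 2 / q)) + (q / X ^ 2) ^ v *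
        (1 / (X * (1 - X / q)) + (q - 1) / ((q - X) * (1 - X ^ 2 / q))) := by
  have hU : q / X ^ 2 ≠ 1 := by rwa [Ne, div_eq_one_iff_eq (pow_ne_zero 2 hX), eq_comm]
  have hqX : q - X ≠ 0 := sub_ne_zero.mpr hXq.symm
  have hX2q : X ^ 2 - q ≠ 0 := sub_ne_zero.mpr hX2
  have h1 : 1 - X / q = (q - X) / q := by field_simp
  have h2 : 1 - X ^ 2 / q = -(X ^ 2 - q) / q := by field_simp; ring
  have h3 : q / X ^ 2 - 1 = -(X ^ 2 - q) / X ^ 2 := by field_simp; ring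
  have h4 : X - q = -(q - X) := by ring
  rw [geom_sum_Ico hU (by omega), pow_succ, pow_one, h1, h2, h3, h4]
  generalize (q / X ^ 2) ^ v = Q
  field_simp
  ring

theorem tsum_jacobiG_mul_cpow {p k : ℕ} [Fact p.Prime] (hp : Odd p) (hk : k ≠ 0) (s : ℂ) :
    ∑' j : ℕ, (if 1 ≤ j then jacobiG (p ^ j) (k ^ 2) * (p : ℂ) ^ (-(j : ℂ) * (s + 1 / 2)) else 0) =
      (1 - 1 / p) * ∑ i ∈ Finset.Ico 1 (k.factorization p + 1), (p / ((p : ℂ) ^ s) ^ 2) ^ i +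
        (p / ((p : ℂ) ^ s) ^ 2) ^ k.factorization p / (p : ℂ) ^ s := by
  have hp0 : p ≠ 0 := NeZero.ne p
  have hX : (p : ℂ) ^ s ≠ 0 := by simp [cpow_eq_zero_iff, hp0]
  have hroot : ((√p : ℝ) : ℂ) ≠ 0 :=
    ofReal_ne_zero.mpr (Real.sqrt_pos.mpr (mod_cast NeZero.pos p)).ne'
  have hroot_sq : ((√p : ℝ) : ℂ) ^ 2 = p := mod_cast Real.sq_sqrt p.cast_nonneg
  have hratio (i : ℕ) : (p : ℂ) ^ (2 * i) * ((p : ℂ) ^ s * (√p : ℝ))⁻¹ ^ (2 * i) =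
      (p / ((p : ℂ) ^ s) ^ 2) ^ i := by
    rw [pow_mul, pow_mul, ← mul_pow, inv_pow, mul_pow ((p : ℂ) ^ s),
      hroot_sq]
    field_simp
  simp only [natCast_cpow_neg_mul_add_half hp0]
  rw [(hasSum_jacobiG_prime_pow_sq hp hk _).tsum_eq, Finset.mul_sum]
  congr 1
  · refine Finset.sum_congr rfl fun i hi ↦ ?_
    have hi0 : 2 * i ≠ 0 := by rw [Finset.mem_Ico] at hi; omega
    rw [cast_totient_prime_pow Fact.out hi0, mul_assoc, hratio]
  · rw [← hratio, pow_succ]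
    field_simp

theorem localFactor_eq {p k : ℕ} (hpk : p ∈ k.primeFactors) (hk : Odd k) {s : ℂ}
    (hs : (p : ℂ) ^ s ≠ p) (hs2 : (p : ℂ) ^ (2 * s) ≠ p) :
    1 + (1 - (p : ℂ) ^ (s - 1))⁻¹ *
        ∑' j : ℕ, (if 1 ≤ j then jacobiG (p ^ j) (k ^ 2) * (p : ℂ) ^ (-(j : ℂ) * (s + 1 / 2))
          else 0) =
      1 + ((p : ℂ) - 1) / (((p : ℂ) ^ s - p) * (1 - (p : ℂ) ^ (2 * s - 1))) +
        (p : ℂ) ^ (-((2 * k.factorization p : ℕ) : ℂ) * (s - 1 / 2)) *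
          (1 / ((p : ℂ) ^ s * (1 - (p : ℂ) ^ (s - 1))) +
            ((p : ℂ) - 1) / ((p - (p : ℂ) ^ s) * (1 - (p : ℂ) ^ (2 * s - 1)))) := by
  have : Fact p.Prime := ⟨Nat.prime_of_mem_primeFactors hpk⟩
  have hp : Odd p := hk.of_dvd_nat (Nat.dvd_of_mem_primeFactors hpk)
  have hk0 : k ≠ 0 := (Nat.mem_primeFactors.mp hpk).2.2
  have hp0 : p ≠ 0 := NeZero.ne p
  have hp0' : (p : ℂ) ≠ 0 := NeZero.ne _
  rw [natCast_cpow_two_mul] at hs2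
  rw [tsum_jacobiG_mul_cpow hp hk0, natCast_cpow_neg_two_mul_sub_half hp0, cpow_sub _ _ hp0',
    cpow_sub _ _ hp0', cpow_one, natCast_cpow_two_mul]
  exact localFactor_identity hp0' (by simp [cpow_eq_zero_iff, hp0]) hs hs2 _

lemma natCast_cpow_ne_self {n : ℕ} (hn : 1 < n) {s : ℂ} (hs : s.re ≠ 1) : (n : ℂ) ^ s ≠ n := by
  intro h
  have hnorm : (n : ℝ) ^ s.re = (n : ℝ) ^ (1 : ℝ) := by
    rw [← norm_natCast_cpow_of_pos (by omega), h, norm_natCast, Real.rpow_one]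
  exact hs ((Real.rpow_right_inj (by positivity) (mod_cast hn.ne')).mp hnorm)

end LocalFactor

theorem statement19_general (k : ℕ) (hk : Odd k) (s : ℂ)
    (hs : ∀ p ∈ k.primeFactors, (p : ℂ) ^ s ≠ p ∧ (p : ℂ) ^ (2 * s) ≠ p) :
    (∏ p ∈ k.primeFactors,
      (1 + (1 - (p : ℂ) ^ (s - 1))⁻¹ *
        ∑' j : ℕ, if 1 ≤ j then jacobiG (p ^ j) (k ^ 2) * (p : ℂ) ^ (-(j : ℂ) * (s + 1 / 2))
          else 0)) =
    ∏ p ∈ k.primeFactors,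
      (1 + ((p : ℂ) - 1) / (((p : ℂ) ^ s - (p : ℂ)) * (1 - (p : ℂ) ^ (2 * s - 1))) +
        (p : ℂ) ^ (-((2 * (k.factorization p) : ℕ) : ℂ) * (s - 1 / 2)) *
          (1 / ((p : ℂ) ^ s * (1 - (p : ℂ) ^ (s - 1))) +
            ((p : ℂ) - 1) / (((p : ℂ) - (p : ℂ) ^ s) * (1 - (p : ℂ) ^ (2 * s - 1))))) :=
  Finset.prod_congr rfl fun p hp ↦ localFactor_eq hp hk (hs p hp).1 (hs p hp).2

/-- explicit evaluation of the local factors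
`∏_{p|k} (1 + (1-p^{s-1})^{-1} Σ_{j≥1} G((·/p^j),k²) p^{-j(s+1/2)})` for odd `k`
and `1/2 < Re s < 1`, with `α_p = 2·v_p(k)`. -/
theorem statement19
    (k : ℕ) (hk : Odd k) (hk1 : 1 ≤ k)
    (s : ℂ) (hs1 : 1 / 2 < s.re) (hs2 : s.re < 1) :
    (∏ p ∈ k.primeFactors,
      (1 + (1 - (p : ℂ) ^ (s - 1))⁻¹ *
        ∑' j : ℕ, if 1 ≤ j then jacobiG (p ^ j) (k ^ 2) * (p : ℂ) ^ (-(j : ℂ) * (s + 1 / 2))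
          else 0)) =
    ∏ p ∈ k.primeFactors,
      (1 + ((p : ℂ) - 1) / (((p : ℂ) ^ s - (p : ℂ)) * (1 - (p : ℂ) ^ (2 * s - 1))) +
        (p : ℂ) ^ (-((2 * (k.factorization p) : ℕ) : ℂ) * (s - 1 / 2)) *
          (1 / ((p : ℂ) ^ s * (1 - (p : ℂ) ^ (s - 1))) +
            ((p : ℂ) - 1) / (((p : ℂ) - (p : ℂ) ^ s) * (1 - (p : ℂ) ^ (2 * s - 1))))) := by
  refine statement19_general k hk s fun p hp ↦ ?_
  have hp1 : 1 < p := (Nat.prime_of_mem_primeFactors hp).one_lt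
  have hre : 1 < (2 * s).re := by rw [two_mul, add_re]; linarith
  exact ⟨natCast_cpow_ne_self hp1 hs2.ne, natCast_cpow_ne_self hp1 hre.ne'⟩
end LandsbergSchaar
end
end
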